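/- Let m > 1 be an integer. Then the field F^1_m(ℚ) of meromorphic modular functions for Γ^1(m) with rational Fourier coefficients is generated over ℚ(j) by the single Fricke function f_{(1/m, 0)}; that is, F^1_m(ℚ) = ℚ(j, f_{(1/m,0)}), where j is the elliptic modular j-invariant. -/

import Mathlib

open Complex UpperHalfPlane Matrix MatrixGroups CongruenceSubgroup
open scoped UpperHalfPlane Manifold Real

noncomputable section

/-- `N·τ` as a point of the upper half-plane (junk value `τ` if `N = 0`). -/
def hsmul (N : ℕ) (τ : UpperHalfPlane) : UpperHalfPlane :=
  if hN : 0 < N then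
    ⟨(N : ℂ) * τ, by
      have h0 : (0 : ℝ) < (N : ℝ) := by exact_mod_cast hN
      simpa [Complex.mul_im] using mul_pos h0 τ.2⟩
  else τ

/-- The Siegel function `g_r(τ)` given by its infinite product expansion. -/
def siegel (r : ℚ × ℚ) (τ : ℍ) : ℂ :=
  -Complex.exp ((Real.pi : ℂ) * Complex.I * (((r.1 : ℂ) ^ 2 - (r.1 : ℂ) + 1 / 6) * τ)) *
    Complex.exp ((Real.pi : ℂ) * Complex.I * (r.2 : ℂ) * ((r.1 : ℂ) - 1)) *
    (1 - Complex.exp (2 * (Real.pi : ℂ) * Complex.I * ((r.1 : ℂ) * τ + (r.2 : ℂ)))) *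
    ∏' n : ℕ,
      ((1 - Complex.exp (2 * (Real.pi : ℂ) * Complex.I *
          (((n : ℂ) + 1 + (r.1 : ℂ)) * τ + (r.2 : ℂ)))) *
       (1 - Complex.exp (2 * (Real.pi : ℂ) * Complex.I *
          (((n : ℂ) + 1 - (r.1 : ℂ)) * τ - (r.2 : ℂ)))))

/-- The lattice point `ω = m·τ + n` attached to a pair `(m,n) ∈ ℤ²`. -/
def lat (τ : ℍ) (p : ℤ × ℤ) : ℂ := (p.1 : ℂ) * τ + (p.2 : ℂ)

/-- `g₂(τ) = 60 ∑_{ω ∈ L_τ ∖ {0}} ω⁻⁴`. -/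
def g2C (τ : ℍ) : ℂ := 60 * ∑' p : {p : ℤ × ℤ // p ≠ 0}, ((lat τ p.1) ^ 4)⁻¹

/-- `g₃(τ) = 140 ∑_{ω ∈ L_τ ∖ {0}} ω⁻⁶`. -/
def g3C (τ : ℍ) : ℂ := 140 * ∑' p : {p : ℤ × ℤ // p ≠ 0}, ((lat τ p.1) ^ 6)⁻¹

/-- The discriminant `Δ(τ) = g₂(τ)³ - 27 g₃(τ)²`. -/
def discC (τ : ℍ) : ℂ := g2C τ ^ 3 - 27 * g3C τ ^ 2

/-- The Weierstrass `℘`-function relative to the lattice `L_τ = ℤτ + ℤ`. -/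
def wpC (z : ℂ) (τ : ℍ) : ℂ :=
  (z ^ 2)⁻¹ + ∑' p : {p : ℤ × ℤ // p ≠ 0}, (((z - lat τ p.1) ^ 2)⁻¹ - ((lat τ p.1) ^ 2)⁻¹)

/-- The Fricke function `f_r(τ)`. -/
def fricke (r : ℚ × ℚ) (τ : ℍ) : ℂ :=
  -(2 ^ 7 * 3 ^ 5) * (g2C τ * g3C τ / discC τ) * wpC ((r.1 : ℂ) * τ + (r.2 : ℂ)) τ

/-- The elliptic modular `j`-invariant. -/
def jinv (τ : ℍ) : ℂ := 1728 * g2C τ ^ 3 / discC τ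

/-- The Dedekind eta function. -/
def etaC (τ : ℍ) : ℂ :=
  (Real.sqrt (2 * Real.pi) : ℂ) * Complex.exp (2 * (Real.pi : ℂ) * Complex.I / 16) *
    Complex.exp (2 * (Real.pi : ℂ) * Complex.I * τ / 24) *
    ∏' n : ℕ, (1 - Complex.exp (2 * (Real.pi : ℂ) * Complex.I * ((n : ℂ) + 1) * τ))

/-- `r ∈ ℚ² ∖ ℤ²`. -/
def NonIntegral (r : ℚ × ℚ) : Prop := ¬ ∃ a b : ℤ, r = ((a : ℚ), (b : ℚ))

/-- `r ∈ (1/N)ℤ²`. -/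
def InDen (N : ℕ) (r : ℚ × ℚ) : Prop := ∃ a b : ℤ, r = ((a : ℚ) / N, (b : ℚ) / N)

/-- Membership in `Γ^1(N)`: `a ≡ d ≡ 1` and `b ≡ 0 (mod N)`. -/
def GammaUpper (N : ℕ) (γ : SL(2, ℤ)) : Prop :=
  ((γ 0 0 : ℤ) : ZMod N) = 1 ∧ ((γ 1 1 : ℤ) : ZMod N) = 1 ∧ ((γ 0 1 : ℤ) : ZMod N) = 0

/-- The transpose action `ᵗγ r = (a r₁ + c r₂, b r₁ + d r₂)` of `γ = [[a,b],[c,d]]`. -/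
def tAct (γ : SL(2, ℤ)) (r : ℚ × ℚ) : ℚ × ℚ :=
  ((γ 0 0 : ℚ) * r.1 + (γ 1 0 : ℚ) * r.2, (γ 0 1 : ℚ) * r.1 + (γ 1 1 : ℚ) * r.2)

/-- The power `q^{n/d} = e^{2πi(n/d)τ}`. -/
def qpow (d : ℕ) (n : ℤ) (τ : ℍ) : ℂ :=
  Complex.exp (2 * (Real.pi : ℂ) * Complex.I * ((n : ℂ) / (d : ℂ)) * τ)

/-- `h` is a weakly holomorphic modular function for `Γ₁(N)` with rational
Fourier coefficients: holomorphic on `ℍ`, `Γ₁(N)`-invariant, with a convergent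
`q`-expansion at `i∞` having rational coefficients, and meromorphic at every cusp. -/
def IsWeaklyHolo1 (N : ℕ) (h : ℍ → ℂ) : Prop :=
  MDifferentiable 𝓘(ℂ) 𝓘(ℂ) h ∧
  (∀ γ ∈ Gamma1 N, ∀ τ : ℍ, h (γ • τ) = h τ) ∧
  (∃ n₀ : ℤ, ∃ c : ℕ → ℚ,
    ∀ τ : ℍ, HasSum (fun n : ℕ => (c n : ℂ) * qpow 1 (n₀ + n) τ) (h τ)) ∧
  (∀ γ : SL(2, ℤ), ∃ n₀ : ℤ, ∃ c : ℕ → ℂ,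
    ∀ τ : ℍ, HasSum (fun n : ℕ => c n * qpow N (n₀ + n) τ) (h (γ • τ)))

/-- `h` is a weakly holomorphic modular function for `Γ^1(N)` with rational
Fourier coefficients (the expansion at `i∞` being in powers of `q^{1/N}`). -/
def IsWeaklyHoloUp (N : ℕ) (h : ℍ → ℂ) : Prop :=
  MDifferentiable 𝓘(ℂ) 𝓘(ℂ) h ∧
  (∀ γ : SL(2, ℤ), GammaUpper N γ → ∀ τ : ℍ, h (γ • τ) = h τ) ∧
  (∃ n₀ : ℤ, ∃ c : ℕ → ℚ,
    ∀ τ : ℍ, HasSum (fun n : ℕ => (c n : ℂ) * qpow N (n₀ + n) τ) (h τ)) ∧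
  (∀ γ : SL(2, ℤ), ∃ n₀ : ℤ, ∃ c : ℕ → ℂ,
    ∀ τ : ℍ, HasSum (fun n : ℕ => c n * qpow N (n₀ + n) τ) (h (γ • τ)))

/-- The Weierstrass-unit generator
`f^1_{m,N} = (f_{(1/N,0)} - f_{(1/m,0)})/(f_{(2/m,0)} - f_{(1/m,0)})`. -/
def fUnit (m N : ℕ) (τ : ℍ) : ℂ :=
  (fricke ((1 : ℚ) / N, 0) τ - fricke ((1 : ℚ) / m, 0) τ) /
    (fricke ((2 : ℚ) / m, 0) τ - fricke ((1 : ℚ) / m, 0) τ)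

/-- The extension of `h : ℍ → ℂ` to `ℂ` by `0`. -/
def extH (h : ℍ → ℂ) : ℂ → ℂ := fun z => if hz : 0 < z.im then h ⟨z, hz⟩ else 0

/-- `h` is a meromorphic modular function for `Γ^1(m)` with rational Fourier
coefficients: meromorphic on `ℍ`, `Γ^1(m)`-invariant, with a `q^{1/m}`-expansion
at `i∞` with rational coefficients valid for `im τ` large, and meromorphic at
every cusp. -/
def IsMeroModUp (m : ℕ) (h : ℍ → ℂ) : Prop :=
  MeromorphicOn (extH h) {z : ℂ | 0 < z.im} ∧
  (∀ γ : SL(2, ℤ), GammaUpper m γ → ∀ τ : ℍ, h (γ • τ) = h τ) ∧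
  (∃ A : ℝ, ∃ n₀ : ℤ, ∃ c : ℕ → ℚ, ∀ τ : ℍ, A < τ.im →
    HasSum (fun n : ℕ => (c n : ℂ) * qpow m (n₀ + n) τ) (h τ)) ∧
  (∀ γ : SL(2, ℤ), ∃ A : ℝ, ∃ n₀ : ℤ, ∃ c : ℕ → ℂ, ∀ τ : ℍ, A < τ.im →
    HasSum (fun n : ℕ => c n * qpow m (n₀ + n) τ) (h (γ • τ)))

/-- Evaluation of a two-variable rational polynomial at `(j(τ), f_{(1/m,0)}(τ))`. -/
def evalJF (m : ℕ) (P : MvPolynomial (Fin 2) ℚ) (τ : ℍ) : ℂ :=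
  MvPolynomial.aeval ![jinv τ, fricke ((1 : ℚ) / m, 0) τ] P

open Filter Topology Asymptotics

/-! ### Germs at `0` with Taylor coefficients in a subfield -/

/-- Analytic at `0` with all derivatives at zero in `K`. -/
def KAn (K : Subfield ℂ) (φ : ℂ → ℂ) : Prop :=
  AnalyticAt ℂ φ 0 ∧ ∀ n, iteratedDeriv n φ 0 ∈ K

lemma hasFPS_of_hasSum {a : ℕ → ℂ} {φ : ℂ → ℂ} {r : NNReal} (hr : 0 < r)
    (h : ∀ z : ℂ, ‖z‖ < r → HasSum (fun n => a n * z ^ n) (φ z)) :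
    HasFPowerSeriesOnBall φ (FormalMultilinearSeries.ofScalars ℂ a) 0 r := by
  refine ⟨?_, by exact_mod_cast hr, ?_⟩
  · refine ENNReal.le_of_forall_nnreal_lt fun s hs => ?_
    apply FormalMultilinearSeries.le_radius_of_summable_norm
    have hs' : ‖((s : ℝ) : ℂ)‖ < r := by
      simpa using hs
    have := (h _ hs').summable.norm
    refine this.congr fun n => ?_
    simp
  · intro y hy
    have hy' : ‖y‖ < r := by simpa [enorm_eq_nnnorm] using hy
    simpa [FormalMultilinearSeries.ofScalars_apply_eq, mul_comm] using h y hy'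

lemma iteratedDeriv_of_fps {a : ℕ → ℂ} {φ : ℂ → ℂ}
    (h : HasFPowerSeriesAt φ (FormalMultilinearSeries.ofScalars ℂ a) 0) (n : ℕ) :
    iteratedDeriv n φ 0 = n.factorial * a n := by
  have h2 := h.analyticAt.hasFPowerSeriesAt
  have h3 := h2.eq_formalMultilinearSeries h
  have h4 := FormalMultilinearSeries.ofScalars_series_injective ℂ ℂ h3
  have := congrFun h4 n
  have hn : (n.factorial : ℂ) ≠ 0 := by exact_mod_cast n.factorial_ne_zero
  rw [← this]; field_simp

lemma natCast_memK (K : Subfield ℂ) (n : ℕ) : (n : ℂ) ∈ K := by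
  exact natCast_mem K n

lemma KAn.of_fps {K : Subfield ℂ} {a : ℕ → ℂ} {φ : ℂ → ℂ}
    (h : HasFPowerSeriesAt φ (FormalMultilinearSeries.ofScalars ℂ a) 0) (ha : ∀ n, a n ∈ K) :
    KAn K φ :=
  ⟨h.analyticAt, fun n => by
    rw [iteratedDeriv_of_fps h]; exact K.mul_mem (natCast_mem K _) (ha n)⟩

lemma KAn.congr {K : Subfield ℂ} {φ ψ : ℂ → ℂ} (h : KAn K φ) (e : φ =ᶠ[𝓝 0] ψ) : KAn K ψ :=
  ⟨h.1.congr e, fun n => by rw [← e.iteratedDeriv_eq]; exact h.2 n⟩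

lemma KAn.const {K : Subfield ℂ} {c : ℂ} (hc : c ∈ K) : KAn K (fun _ => c) :=
  ⟨analyticAt_const, fun n => by
    rw [iteratedDeriv_const]; split_ifs
    exacts [hc, K.zero_mem]⟩

lemma KAn.id {K : Subfield ℂ} : KAn K (fun z => z) :=
  ⟨analyticAt_id, fun n => by
    rw [iteratedDeriv_fun_id_zero]; split_ifs
    exacts [K.one_mem, K.zero_mem]⟩

lemma KAn.add {K : Subfield ℂ} {φ ψ : ℂ → ℂ} (h : KAn K φ) (h' : KAn K ψ) :
    KAn K (φ + ψ) :=
  ⟨h.1.add h'.1, fun n => by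
    rw [iteratedDeriv_add h.1.contDiffAt h'.1.contDiffAt]; exact K.add_mem (h.2 n) (h'.2 n)⟩

lemma KAn.mul {K : Subfield ℂ} {φ ψ : ℂ → ℂ} (h : KAn K φ) (h' : KAn K ψ) :
    KAn K (φ * ψ) :=
  ⟨h.1.mul h'.1, fun n => by
    rw [iteratedDeriv_mul h.1.contDiffAt h'.1.contDiffAt]
    exact K.sum_mem fun i _ => K.mul_mem (K.mul_mem (natCast_mem K _) (h.2 _)) (h'.2 _)⟩

lemma KAn.neg {K : Subfield ℂ} {φ : ℂ → ℂ} (h : KAn K φ) : KAn K (-φ) := by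
  have := (KAn.const (K := K) (c := -1) (K.neg_mem K.one_mem)).mul h
  convert this using 1
  ext z; simp

lemma KAn.pow {K : Subfield ℂ} {φ : ℂ → ℂ} (h : KAn K φ) (n : ℕ) : KAn K (φ ^ n) := by
  induction n with
  | zero => simpa using! KAn.const (K := K) (c := 1) K.one_mem
  | succ n ih => rw [pow_succ]; exact ih.mul h

lemma KAn.inv {K : Subfield ℂ} {φ : ℂ → ℂ} (h : KAn K φ) (h0 : φ 0 ≠ 0) : KAn K (φ⁻¹) := by
  have han : AnalyticAt ℂ φ⁻¹ 0 := h.1.inv h0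
  refine ⟨han, fun n => ?_⟩
  have h0K : φ 0 ∈ K := by simpa using h.2 0
  induction n using Nat.strong_induction_on with
  | _ n ih =>
    rcases Nat.eq_zero_or_pos n with rfl | hn
    · simpa using K.inv_mem h0K
    have e : (φ * φ⁻¹) =ᶠ[𝓝 0] fun _ => (1 : ℂ) := by
      filter_upwards [h.1.continuousAt.eventually_ne h0] with z hz
      simp [hz]
    have h1 := e.iteratedDeriv_eq n
    rw [iteratedDeriv_const, if_neg hn.ne', iteratedDeriv_mul h.1.contDiffAt han.contDiffAt,
      Finset.sum_range_succ'] at h1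
    simp only [Nat.choose_zero_right, Nat.cast_one, one_mul, iteratedDeriv_zero, Nat.sub_zero] at h1
    have h2 : iteratedDeriv n φ⁻¹ 0 = -(φ 0)⁻¹ * ∑ k ∈ Finset.range n,
        (n.choose (k + 1) : ℂ) * iteratedDeriv (k + 1) φ 0 *
          iteratedDeriv (n - (k + 1)) φ⁻¹ 0 := by
      rw [eq_neg_of_add_eq_zero_left h1]; field_simp
    rw [h2]
    refine K.mul_mem (K.neg_mem (K.inv_mem h0K)) (K.sum_mem fun i hi => ?_)
    exact K.mul_mem (K.mul_mem (natCast_mem K _) (h.2 _)) (ih _ (by omega))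

lemma KAn.of_id_mul {K : Subfield ℂ} {φ ψ : ℂ → ℂ} (h : KAn K φ) (hψ : AnalyticAt ℂ ψ 0)
    (n : ℕ) (e : ∀ᶠ z in 𝓝 0, φ z = z ^ n * ψ z) : KAn K ψ := by
  refine ⟨hψ, fun k => ?_⟩
  have e' : φ =ᶠ[𝓝 0] ((fun z => z ^ n) * ψ) := e
  have h1 := e'.iteratedDeriv_eq (n + k)
  have hp : AnalyticAt ℂ (fun z : ℂ => z ^ n) 0 := by fun_prop
  rw [iteratedDeriv_mul hp.contDiffAt hψ.contDiffAt, Finset.sum_eq_single n] at h1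
  · have : ((n + k).choose n : ℂ) * (n.factorial : ℂ) ≠ 0 := by
      exact_mod_cast (Nat.mul_pos (Nat.choose_pos (by omega)) n.factorial_pos).ne'
    have h3 : iteratedDeriv n (fun z : ℂ => z ^ n) 0 = n.factorial := by
      have := iteratedDeriv_pow (𝕜 := ℂ) (x := 0) n n
      rw [this]; simp [Nat.descFactorial_self]
    rw [h3, Nat.add_sub_cancel_left] at h1
    have h2 : iteratedDeriv k ψ 0 =
        (((n + k).choose n : ℂ) * (n.factorial : ℂ))⁻¹ * iteratedDeriv (n + k) φ 0 := by
      rw [h1, inv_mul_cancel_left₀ this]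
    rw [h2]
    exact K.mul_mem (K.inv_mem (K.mul_mem (natCast_mem K _) (natCast_mem K _))) (h.2 _)
  · intro b _ hb
    have : iteratedDeriv b (fun z : ℂ => z ^ n) 0 = 0 := by
      have := iteratedDeriv_pow (𝕜 := ℂ) (x := 0) n b
      rw [this]
      rcases lt_or_gt_of_ne hb with hb | hb
      · rw [zero_pow (by omega), mul_zero]
      · rw [Nat.descFactorial_of_lt hb]; simp
    rw [this]; ring
  · intro hh; simp at hh

/-- Generalised power series `∑ c_i z^{e_i}` with finite fibres. -/
lemma gen_series {ι : Type*} {K : Subfield ℂ} (c : ι → ℂ) (e : ι → ℕ) (hc : ∀ i, c i ∈ K)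
    (hfin : ∀ n, {i | e i = n}.Finite)
    (hs : ∀ z : ℂ, ‖z‖ < 1 → Summable fun i => c i * z ^ e i) :
    ∃ a : ℕ → ℂ, (∀ n, a n = ∑ i ∈ (hfin n).toFinset, c i) ∧ (∀ n, a n ∈ K) ∧
      HasFPowerSeriesOnBall (fun z => ∑' i, c i * z ^ e i)
        (FormalMultilinearSeries.ofScalars ℂ a) 0 1 := by
  refine ⟨fun n => ∑ i ∈ (hfin n).toFinset, c i, fun n => rfl,
    fun n => K.sum_mem fun i _ => hc i, ?_⟩
  apply hasFPS_of_hasSum (r := 1) one_pos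
  intro z hz
  have h1 := (hs z (by simpa using hz)).hasSum
  rw [← (Equiv.sigmaFiberEquiv e).hasSum_iff] at h1
  refine h1.sigma fun n => ?_
  have : Fintype {i // e i = n} := (hfin n).fintype
  have h2 := hasSum_fintype (fun i : {i // e i = n} => c i * z ^ n)
  convert h2 using 1
  · ext i
    simp [i.2]
  · rw [← Finset.sum_mul]
    congr 1
    refine Finset.sum_subtype (hfin n).toFinset (fun i => ?_) c
    simp

lemma gen_series_KAn {ι : Type*} {K : Subfield ℂ} (c : ι → ℂ) (e : ι → ℕ) (hc : ∀ i, c i ∈ K)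
    (hfin : ∀ n, {i | e i = n}.Finite)
    (hs : ∀ z : ℂ, ‖z‖ < 1 → Summable fun i => c i * z ^ e i) :
    KAn K (fun z => ∑' i, c i * z ^ e i) := by
  obtain ⟨a, -, ha, h⟩ := gen_series c e hc hfin hs
  exact KAn.of_fps h.hasFPowerSeriesAt ha

lemma gen_series_diff {ι : Type*} (c : ι → ℂ) (e : ι → ℕ)
    (hfin : ∀ n, {i | e i = n}.Finite)
    (hs : ∀ z : ℂ, ‖z‖ < 1 → Summable fun i => c i * z ^ e i) :
    DifferentiableOn ℂ (fun z => ∑' i, c i * z ^ e i) (Metric.ball 0 1) := by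
  obtain ⟨a, -, ha, h⟩ := gen_series (K := ⊤) c e (fun _ => trivial) hfin hs
  have := h.differentiableOn
  rwa [← ENNReal.ofReal_one, Metric.eball_ofReal] at this

/-! ### `q`-expansions -/

lemma qpow_eq_zpow (m : ℕ) (n : ℤ) (τ : ℍ) : qpow m n τ = qpow m 1 τ ^ n := by
  unfold qpow
  rw [← Complex.exp_int_mul]
  congr 1
  push_cast
  ring

lemma qpow_ne_zero (m : ℕ) (n : ℤ) (τ : ℍ) : qpow m n τ ≠ 0 := Complex.exp_ne_zero _

lemma qpow_add (m : ℕ) (a b : ℤ) (τ : ℍ) : qpow m (a + b) τ = qpow m a τ * qpow m b τ := by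
  rw [qpow_eq_zpow, zpow_add₀ (qpow_ne_zero _ _ _), ← qpow_eq_zpow, ← qpow_eq_zpow]

lemma qpow_nat (m : ℕ) (n : ℕ) (τ : ℍ) : qpow m n τ = qpow m 1 τ ^ n := by
  rw [qpow_eq_zpow, zpow_natCast]

lemma qpow_zero (m : ℕ) (τ : ℍ) : qpow m 0 τ = 1 := by simp [qpow]

lemma qpow_one_eq (m : ℕ) (τ : ℍ) : qpow m 1 τ = Function.Periodic.qParam m τ := by
  unfold qpow Function.Periodic.qParam
  congr 1
  push_cast
  ring

lemma norm_qpow_lt (m : ℕ) (hm : 0 < m) (τ : ℍ) : ‖qpow m 1 τ‖ < 1 := by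
  rw [qpow_one_eq]
  exact Function.Periodic.norm_qParam_lt_one (by exact_mod_cast hm) τ.im_pos

lemma qpow_tendsto (m : ℕ) (hm : 0 < m) : Tendsto (qpow m 1) atImInfty (𝓝[≠] 0) := by
  have h := (Function.Periodic.qParam_tendsto (h := m) (by exact_mod_cast hm)).comp
    tendsto_coe_atImInfty
  refine h.congr fun τ => ?_
  simp [qpow_one_eq]

/-- `F` has a Laurent expansion at `i∞` in `q^{1/m}` with coefficients in `K`. -/
def QK (K : Subfield ℂ) (m : ℕ) (F : ℍ → ℂ) : Prop :=
  ∃ n0 : ℤ, ∃ φ : ℂ → ℂ, KAn K φ ∧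
    ∀ᶠ τ in atImInfty, F τ = qpow m n0 τ * φ (qpow m 1 τ)

lemma QK.congr {K : Subfield ℂ} {m : ℕ} {F G : ℍ → ℂ} (h : QK K m F) (e : F =ᶠ[atImInfty] G) :
    QK K m G := by
  obtain ⟨n, φ, h1, h2⟩ := h
  refine ⟨n, φ, h1, ?_⟩
  filter_upwards [h2, e] with τ a b
  rw [← b, a]

lemma QK.of_KAn {K : Subfield ℂ} {m : ℕ} {F : ℍ → ℂ} {φ : ℂ → ℂ} (h : KAn K φ)
    (e : ∀ τ, F τ = φ (qpow m 1 τ)) : QK K m F :=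
  ⟨0, φ, h, Eventually.of_forall fun τ => by rw [e, qpow_zero, one_mul]⟩

lemma QK.const {K : Subfield ℂ} {m : ℕ} {c : ℂ} (hc : c ∈ K) : QK K m (fun _ => c) :=
  QK.of_KAn (KAn.const hc) fun _ => rfl

lemma QK.mul {K : Subfield ℂ} {m : ℕ} {F G : ℍ → ℂ} (h : QK K m F) (h' : QK K m G) :
    QK K m (F * G) := by
  obtain ⟨n, φ, h1, h2⟩ := h
  obtain ⟨n', φ', h1', h2'⟩ := h'
  refine ⟨n + n', φ * φ', h1.mul h1', ?_⟩
  filter_upwards [h2, h2'] with τ a b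
  simp only [Pi.mul_apply, qpow_add, a, b]
  ring

lemma QK.shift {K : Subfield ℂ} {m : ℕ} {F : ℍ → ℂ} (h : QK K m F) :
    ∃ n0 : ℤ, ∀ n ≤ n0, ∃ φ : ℂ → ℂ, KAn K φ ∧
    ∀ᶠ τ in atImInfty, F τ = qpow m n τ * φ (qpow m 1 τ) := by
  obtain ⟨n0, φ, h1, h2⟩ := h
  refine ⟨n0, fun n hn => ?_⟩
  obtain ⟨k, rfl⟩ := Int.exists_add_of_le hn
  refine ⟨(fun z => z) ^ k * φ, (KAn.id.pow k).mul h1, ?_⟩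
  filter_upwards [h2] with τ a
  simp only [Pi.mul_apply, Pi.pow_apply, a, qpow_add, qpow_nat]
  ring

lemma QK.add {K : Subfield ℂ} {m : ℕ} {F G : ℍ → ℂ} (h : QK K m F) (h' : QK K m G) :
    QK K m (F + G) := by
  obtain ⟨n, h⟩ := h.shift
  obtain ⟨n', h'⟩ := h'.shift
  obtain ⟨φ, h1, h2⟩ := h (min n n') (min_le_left _ _)
  obtain ⟨φ', h1', h2'⟩ := h' (min n n') (min_le_right _ _)
  refine ⟨min n n', φ + φ', h1.add h1', ?_⟩
  filter_upwards [h2, h2'] with τ a b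
  simp only [Pi.add_apply, a, b]
  ring

lemma QK.neg {K : Subfield ℂ} {m : ℕ} {F : ℍ → ℂ} (h : QK K m F) : QK K m (-F) := by
  have := (QK.const (m := m) (c := -1) (K.neg_mem K.one_mem)).mul h
  convert this using 1
  ext τ; simp

/-- The ring of functions with expansions. -/
def QKr (K : Subfield ℂ) (m : ℕ) : Subring (ℍ → ℂ) where
  carrier := {F | QK K m F}
  mul_mem' := QK.mul
  one_mem' := QK.const K.one_mem
  add_mem' := QK.add
  zero_mem' := QK.const K.zero_mem
  neg_mem' := QK.neg

lemma QK.zero_or {K : Subfield ℂ} {m : ℕ} (hm : 0 < m) {F : ℍ → ℂ} (h : QK K m F) :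
    (∀ᶠ τ in atImInfty, F τ = 0) ∨ (∃ n0 : ℤ, ∃ φ : ℂ → ℂ, KAn K φ ∧ φ 0 ≠ 0 ∧
      ∀ᶠ τ in atImInfty, F τ = qpow m n0 τ * φ (qpow m 1 τ)) := by
  obtain ⟨n, φ, h1, h2⟩ := h
  have ht := (qpow_tendsto m hm).mono_right nhdsWithin_le_nhds
  by_cases h0 : ∀ᶠ z in 𝓝 0, φ z = 0
  · left
    filter_upwards [h2, ht.eventually h0] with τ a b
    rw [a, b, mul_zero]
  · right
    obtain ⟨k, g, hg, hg0, e⟩ := h1.1.exists_eventuallyEq_pow_smul_nonzero_iff.mpr h0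
    simp only [sub_zero, smul_eq_mul] at e
    refine ⟨n + k, g, h1.of_id_mul hg k e, hg0, ?_⟩
    filter_upwards [h2, ht.eventually e] with τ a b
    rw [a, b, qpow_add, qpow_nat]
    ring

lemma QK.zero_or_ne {K : Subfield ℂ} {m : ℕ} (hm : 0 < m) {F : ℍ → ℂ} (h : QK K m F) :
    (∀ᶠ τ in atImInfty, F τ = 0) ∨ (∀ᶠ τ in atImInfty, F τ ≠ 0) := by
  rcases h.zero_or hm with h | ⟨n, φ, h1, h0, h2⟩
  · exact Or.inl h
  · right
    have ht := (qpow_tendsto m hm).mono_right nhdsWithin_le_nhds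
    filter_upwards [h2, ht.eventually (h1.1.continuousAt.eventually_ne h0)] with τ a b
    rw [a]
    exact mul_ne_zero (qpow_ne_zero _ _ _) b

lemma QK.inv {K : Subfield ℂ} {m : ℕ} (hm : 0 < m) {F : ℍ → ℂ} (h : QK K m F) :
    QK K m (F⁻¹) := by
  rcases h.zero_or hm with h | ⟨n, φ, h1, h0, h2⟩
  · refine (QK.const (c := 0) K.zero_mem).congr ?_
    filter_upwards [h] with τ a
    simp [a]
  · refine ⟨-n, φ⁻¹, h1.inv h0, ?_⟩
    filter_upwards [h2] with τ a
    simp only [Pi.inv_apply, a, mul_inv]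
    rw [qpow_eq_zpow m (-n), _root_.zpow_neg, ← qpow_eq_zpow]

lemma QK.div {K : Subfield ℂ} {m : ℕ} (hm : 0 < m) {F G : ℍ → ℂ} (h : QK K m F)
    (h' : QK K m G) : QK K m (F / G) := by
  rw [div_eq_mul_inv]; exact h.mul (h'.inv hm)

lemma QK.mono {K K' : Subfield ℂ} (hK : K ≤ K') {m : ℕ} {F : ℍ → ℂ} (h : QK K m F) :
    QK K' m F := by
  obtain ⟨n, φ, h1, h2⟩ := h
  exact ⟨n, φ, ⟨h1.1, fun n => hK (h1.2 n)⟩, h2⟩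

lemma QK.of_hasSum {K : Subfield ℂ} {m : ℕ} (hm : 0 < m) {F : ℍ → ℂ} {A : ℝ} {n0 : ℤ}
    {c : ℕ → ℂ} (hc : ∀ n, c n ∈ K)
    (h : ∀ τ : ℍ, A < τ.im → HasSum (fun n : ℕ => c n * qpow m (n0 + n) τ) (F τ)) :
    QK K m F := by
  have key : ∀ τ : ℍ, A < τ.im →
      HasSum (fun n : ℕ => c n * qpow m 1 τ ^ n) ((qpow m n0 τ)⁻¹ * F τ) := by
    intro τ hτ
    have := (h τ hτ).mul_left (qpow m n0 τ)⁻¹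
    refine HasSum.congr_fun this fun n => ?_
    rw [qpow_add, qpow_nat]
    field_simp [qpow_ne_zero]
  set p := FormalMultilinearSeries.ofScalars ℂ c
  obtain ⟨τ0, hτ0⟩ : ∃ τ : ℍ, A < τ.im := by
    refine ⟨⟨⟨0, max A 0 + 1⟩, by simp; positivity⟩, ?_⟩
    show A < max A 0 + 1
    linarith [le_max_left A 0]
  have hr : (‖qpow m 1 τ0‖₊ : ENNReal) ≤ p.radius := by
    apply FormalMultilinearSeries.le_radius_of_summable_norm
    refine (key τ0 hτ0).summable.norm.congr fun n => ?_
    simp [p]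
  have hpos : 0 < p.radius := lt_of_lt_of_le (by simpa using qpow_ne_zero _ _ _) hr
  have hps := p.hasFPowerSeriesOnBall hpos
  refine ⟨n0, p.sum, KAn.of_fps hps.hasFPowerSeriesAt hc, ?_⟩
  refine (atImInfty_mem _).mpr ⟨A + 1, fun τ hτ => ?_⟩
  have h1 := key τ (by linarith)
  have h2 : p.sum (qpow m 1 τ) = ∑' n : ℕ, c n * qpow m 1 τ ^ n := by
    unfold FormalMultilinearSeries.sum
    refine tsum_congr fun n => ?_
    rw [FormalMultilinearSeries.ofScalars_apply_eq, smul_eq_mul]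
  show F τ = qpow m n0 τ * p.sum (qpow m 1 τ)
  rw [h2, h1.tsum_eq]
  field_simp [qpow_ne_zero]

lemma QK.hasSum {K : Subfield ℂ} {m : ℕ} (hm : 0 < m) {F : ℍ → ℂ} (h : QK K m F) :
    ∃ A : ℝ, ∃ n0 : ℤ, ∃ c : ℕ → ℂ, (∀ n, c n ∈ K) ∧ ∀ τ : ℍ, A < τ.im →
      HasSum (fun n : ℕ => c n * qpow m (n0 + n) τ) (F τ) := by
  obtain ⟨n0, φ, h1, h2⟩ := h
  have ht := (qpow_tendsto m hm).mono_right nhdsWithin_le_nhds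
  have h3 := h1.1.hasFPowerSeriesAt.eventually_hasSum
  obtain ⟨A, hA⟩ := (atImInfty_mem _).mp (h2.and (ht.eventually h3))
  refine ⟨A, n0, fun n => iteratedDeriv n φ 0 / n.factorial,
    fun n => K.div_mem (h1.2 n) (natCast_mem K _), fun τ hτ => ?_⟩
  obtain ⟨a, b⟩ := hA τ hτ.le
  rw [a]
  have := b.mul_left (qpow m n0 τ)
  simp only [zero_add] at this
  refine HasSum.congr_fun this fun n => ?_
  rw [qpow_add, qpow_nat, FormalMultilinearSeries.ofScalars_apply_eq]
  simp
  ring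

/-- Exponential growth. -/
lemma QK.growth {K : Subfield ℂ} {m : ℕ} (hm : 0 < m) {F : ℍ → ℂ} (h : QK K m F) :
    ∃ k : ℕ, F =O[atImInfty] fun τ => qpow 1 (-k) τ := by
  obtain ⟨n0, φ, h1, h2⟩ := h
  have ht := (qpow_tendsto m hm).mono_right nhdsWithin_le_nhds
  have hφ : (fun τ => φ (qpow m 1 τ)) =O[atImInfty] fun _ => (1 : ℝ) :=
    (h1.1.continuousAt.tendsto.comp ht).isBigO_one ℝ
  refine ⟨n0.natAbs, ?_⟩
  have h3 : F =O[atImInfty] fun τ => qpow m n0 τ * ((1 : ℝ) : ℂ) := by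
    refine (IsBigO.mul (isBigO_refl (qpow m n0) _) (hφ.trans ?_)).congr' ?_ EventuallyEq.rfl
    · exact IsBigO.of_bound 1 (by simp)
    · filter_upwards [h2] with τ a using a.symm
  refine h3.trans (IsBigO.of_bound 1 (Eventually.of_forall fun τ => ?_))
  simp only [ofReal_one, mul_one, one_mul, qpow, Complex.norm_exp]
  refine Real.exp_le_exp.mpr ?_
  have e1 : (2 * (π : ℂ) * Complex.I * (((n0 : ℤ) : ℂ) / (m : ℂ)) * τ).re
      = - (2 * π * (n0 / m) * τ.im) := by
    have : (2 * (π : ℂ) * Complex.I * (((n0 : ℤ) : ℂ) / (m : ℂ)) * τ)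
      = ((2 * π * (n0 / m) : ℝ) : ℂ) * (Complex.I * τ) := by push_cast; ring
    rw [this, Complex.re_ofReal_mul]; simp
  have e2 : ∀ k : ℕ, (2 * (π : ℂ) * Complex.I * (((-(k : ℤ) : ℤ) : ℂ) / ((1 : ℕ) : ℂ)) * τ).re
      = 2 * π * k * τ.im := by
    intro k
    have : (2 * (π : ℂ) * Complex.I * (((-(k : ℤ) : ℤ) : ℂ) / ((1 : ℕ) : ℂ)) * τ)
      = ((-(2 * π * k) : ℝ) : ℂ) * (Complex.I * τ) := by push_cast; ring
    rw [this, Complex.re_ofReal_mul]; simp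
  rw [e1, e2]
  have hpos : 0 < 2 * π * τ.im := by have := τ.im_pos; positivity
  have hle : -((n0 : ℝ) / m) ≤ n0.natAbs := by
    have hm1 : (1 : ℝ) ≤ m := by exact_mod_cast hm
    have ha : ((n0.natAbs : ℕ) : ℝ) = |(n0 : ℝ)| := by
      rw [Nat.cast_natAbs]; simp
    rw [ha]
    calc -((n0 : ℝ) / m) ≤ |(n0 : ℝ) / m| := neg_le_abs _
      _ = |(n0 : ℝ)| / m := by rw [abs_div, abs_of_pos (by linarith : (0 : ℝ) < m)]
      _ ≤ |(n0 : ℝ)| := div_le_self (abs_nonneg _) hm1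
  nlinarith

/-! ### Eisenstein series, discriminant and `j` -/

lemma tsum_lat_eq (τ : ℍ) (k : ℕ) (hk : k ≠ 0) :
    ∑' p : {p : ℤ × ℤ // p ≠ 0}, ((lat τ p.1) ^ k)⁻¹ =
      ∑' v : Fin 2 → ℤ, EisensteinSeries.eisSummand k v τ := by
  have h1 : ∑' p : {p : ℤ × ℤ // p ≠ 0}, ((lat τ p.1) ^ k)⁻¹ =
      ∑' p : ℤ × ℤ, ((lat τ p) ^ k)⁻¹ := by
    refine tsum_subtype_eq_of_support_subset (f := fun p => ((lat τ p) ^ k)⁻¹)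
      (s := {p : ℤ × ℤ | p ≠ 0}) ?_
    intro p hp hp0
    apply hp
    simp [show p = 0 from hp0, lat, hk]
  rw [h1, ← (finTwoArrowEquiv ℤ).tsum_eq]
  refine tsum_congr fun v => ?_
  simp [EisensteinSeries.eisSummand, lat, finTwoArrowEquiv]

lemma tsum_lat_eq_E (τ : ℍ) (k : ℕ) (hk : 3 ≤ k) :
    ∑' p : {p : ℤ × ℤ // p ≠ 0}, ((lat τ p.1) ^ k)⁻¹ =
      2 * riemannZeta k * ModularForm.E hk τ := by
  rw [tsum_lat_eq τ k (by omega),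
    _root_.tsum_eisSummand_eq_riemannZeta_mul_eisensteinSeries hk]
  have : ModularForm.E hk τ = (1 / 2 : ℂ) * eisensteinSeries (N := 1) 0 k τ := rfl
  rw [this]
  ring

lemma g2C_eq (τ : ℍ) : g2C τ = 4 / 3 * (π : ℂ) ^ 4 * ModularForm.E₄ τ := by
  rw [g2C, tsum_lat_eq_E τ 4 (by norm_num)]
  have : riemannZeta ((4 : ℕ) : ℂ) = π ^ 4 / 90 := by exact_mod_cast riemannZeta_four
  rw [this]; ring

lemma bernoulli_six : bernoulli 6 = 1 / 42 := by
  rw [bernoulli_eq_bernoulli'_of_ne_one (by norm_num)]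
  have h5 : bernoulli' 5 = 0 := bernoulli'_eq_zero_of_odd (by decide) (by norm_num)
  rw [bernoulli'_def]
  norm_num [h5, Finset.sum_range_succ, Nat.choose, bernoulli'_two, bernoulli'_three,
    bernoulli'_four]

lemma zeta_six : riemannZeta ((6 : ℕ) : ℂ) = π ^ 6 / 945 := by
  have := riemannZeta_two_mul_nat (k := 3) (by norm_num)
  have e : (2 * ((3 : ℕ) : ℂ)) = ((6 : ℕ) : ℂ) := by norm_num
  rw [e] at this
  rw [this, show 2 * 3 = 6 by norm_num, bernoulli_six]
  simp [Nat.factorial]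
  ring

lemma g3C_eq (τ : ℍ) : g3C τ = 8 / 27 * (π : ℂ) ^ 6 * ModularForm.E₆ τ := by
  rw [g3C, tsum_lat_eq_E τ 6 (by norm_num), zeta_six]
  ring

lemma discC_eq (τ : ℍ) : discC τ = 4096 * (π : ℂ) ^ 12 * ModularForm.discriminant τ := by
  rw [discC, g2C_eq, g3C_eq, ModularForm.discriminant_eq_E₄_cube_sub_E₆_sq]
  ring

lemma pi_ne : (π : ℂ) ≠ 0 := by exact_mod_cast Real.pi_ne_zero

lemma discC_ne (τ : ℍ) : discC τ ≠ 0 := by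
  rw [discC_eq]
  exact mul_ne_zero (mul_ne_zero (by norm_num) (pow_ne_zero _ pi_ne))
    (ModularForm.discriminant_ne_zero τ)

lemma jinv_eq (τ : ℍ) : jinv τ = ModularForm.E₄ τ ^ 3 / ModularForm.discriminant τ := by
  rw [jinv, discC_eq, g2C_eq]
  have := ModularForm.discriminant_ne_zero τ
  have := pi_ne
  field_simp
  ring

lemma fricke_eq (r : ℚ × ℚ) (τ : ℍ) : fricke r τ =
    12 * (ModularForm.E₄ τ * ModularForm.E₆ τ / ModularForm.discriminant τ) *
      (wpC ((r.1 : ℂ) * τ + (r.2 : ℂ)) τ / (2 * π * Complex.I) ^ 2) := by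
  rw [fricke, discC_eq, g2C_eq, g3C_eq]
  have := ModularForm.discriminant_ne_zero τ
  have := pi_ne
  have h : (2 * π * Complex.I) ^ 2 = - (4 * (π : ℂ) ^ 2) := by
    rw [mul_pow, Complex.I_sq]; ring
  rw [h]
  field_simp
  ring

lemma E_smul {k : ℕ} (hk : 3 ≤ k) (γ : SL(2, ℤ)) (τ : ℍ) :
    ModularForm.E hk (γ • τ) = denom γ τ ^ (k : ℤ) * ModularForm.E hk τ := by
  exact SlashInvariantForm.slash_action_eqn'' (ModularForm.E hk)
    (γ := SpecialLinearGroup.mapGL ℝ γ) (by exact ⟨γ, rfl⟩) τ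

lemma denom_ne (γ : SL(2, ℤ)) (τ : ℍ) : denom γ τ ≠ 0 := denom_ne_zero _ _

lemma g2C_smul (γ : SL(2, ℤ)) (τ : ℍ) : g2C (γ • τ) = denom γ τ ^ 4 * g2C τ := by
  have := E_smul (k := 4) (by norm_num) γ τ
  rw [g2C_eq, g2C_eq, this]
  norm_cast
  ring

lemma g3C_smul (γ : SL(2, ℤ)) (τ : ℍ) : g3C (γ • τ) = denom γ τ ^ 6 * g3C τ := by
  have := E_smul (k := 6) (by norm_num) γ τ
  rw [g3C_eq, g3C_eq, this]
  norm_cast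
  ring

lemma discC_smul (γ : SL(2, ℤ)) (τ : ℍ) : discC (γ • τ) = denom γ τ ^ 12 * discC τ := by
  rw [discC, discC, g2C_smul, g3C_smul]; ring

lemma jinv_smul (γ : SL(2, ℤ)) (τ : ℍ) : jinv (γ • τ) = jinv τ := by
  rw [jinv, jinv, g2C_smul, discC_smul]
  have h1 := denom_ne γ τ
  have h2 := discC_ne τ
  field_simp

/-- The field of rational numbers in `ℂ`. -/
def KQ : Subfield ℂ := (algebraMap ℚ ℂ).fieldRange

lemma rat_mem (x : ℚ) : (x : ℂ) ∈ KQ := ⟨x, by simp⟩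

lemma mem_KQ {x : ℂ} (h : x ∈ KQ) : ∃ y : ℚ, (y : ℂ) = x := by
  obtain ⟨y, rfl⟩ := h
  exact ⟨y, by simp⟩

lemma qpow_mul (m k : ℕ) (hm : 0 < m) (n : ℤ) (τ : ℍ) : qpow (k * m) (m * n) τ = qpow k n τ := by
  unfold qpow
  congr 2
  push_cast
  have : (m : ℂ) ≠ 0 := by exact_mod_cast hm.ne'
  rcases Nat.eq_zero_or_pos k with rfl | hk
  · simp
  have : (k : ℂ) ≠ 0 := by exact_mod_cast hk.ne'
  field_simp

lemma QK.level {K : Subfield ℂ} {m : ℕ} (hm : 0 < m) {F : ℍ → ℂ} (h : QK K 1 F) :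
    QK K m F := by
  obtain ⟨A, n0, c, hc, h⟩ := h.hasSum one_pos
  refine QK.of_hasSum hm (A := A) (n0 := m * n0) (c := fun n => if m ∣ n then c (n / m) else 0)
    (fun n => by split_ifs; exacts [hc _, K.zero_mem]) fun τ hτ => ?_
  have hinj : Function.Injective (fun n : ℕ => m * n) := fun a b hab =>
    Nat.eq_of_mul_eq_mul_left hm hab
  rw [← hinj.hasSum_iff]
  · refine HasSum.congr_fun (h τ hτ) fun n => ?_
    simp only [Function.comp, dvd_mul_right, if_true, Nat.mul_div_cancel_left n hm]
    rw [← qpow_mul m 1 hm, one_mul]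
    congr 2
    push_cast
    ring
  · intro x hx
    have : ¬ m ∣ x := fun ⟨y, hy⟩ => hx ⟨y, hy.symm⟩
    simp [this]

lemma E_QK {k : ℕ} (hk : 3 ≤ k) (hk2 : Even k) : QK KQ 1 (ModularForm.E hk) := by
  refine QK.of_hasSum one_pos (A := 0) (n0 := 0)
    (c := fun n => (UpperHalfPlane.qExpansion 1 (ModularForm.E hk)).coeff n) ?_ fun τ _ => ?_
  · intro n
    rw [EisensteinSeries.E_qExpansion_coeff hk hk2]
    split_ifs
    · exact KQ.one_mem
    · exact KQ.mul_mem (KQ.neg_mem (KQ.div_mem (KQ.mul_mem (by exact_mod_cast rat_mem 2)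
        (natCast_mem KQ k)) (rat_mem _))) (natCast_mem KQ _)
  · have := UpperHalfPlane.hasSum_qExpansion (f := ModularForm.E hk) (h := 1) one_pos
      (SlashInvariantFormClass.periodic_comp_ofComplex _ one_mem_strictPeriods_SL)
      (ModularFormClass.holo _) (ModularFormClass.bdd_at_infty _) τ
    refine HasSum.congr_fun this fun n => ?_
    rw [zero_add, qpow_nat, qpow_one_eq]
    simp

lemma E4_QK : QK KQ 1 ModularForm.E₄ := E_QK _ (by decide)
lemma E6_QK : QK KQ 1 ModularForm.E₆ := E_QK _ (by decide)

lemma disc_QK : QK KQ 1 ModularForm.discriminant := by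
  have h : QK KQ 1 ((⇑ModularForm.E₄ * ⇑ModularForm.E₄ * ⇑ModularForm.E₄ +
    -(⇑ModularForm.E₆ * ⇑ModularForm.E₆)) * (fun _ => ((1 / 1728 : ℚ) : ℂ))) :=
    (((E4_QK.mul E4_QK).mul E4_QK).add (E6_QK.mul E6_QK).neg).mul (QK.const (rat_mem _))
  convert h using 1
  ext z
  rw [ModularForm.discriminant_eq_E₄_cube_sub_E₆_sq]
  simp
  ring

lemma jinv_QK : QK KQ 1 jinv := by
  have h : QK KQ 1 ((⇑ModularForm.E₄ * ⇑ModularForm.E₄ * ⇑ModularForm.E₄) /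
    ModularForm.discriminant) :=
    ((E4_QK.mul E4_QK).mul E4_QK).div one_pos disc_QK
  convert h using 1
  ext z
  rw [jinv_eq]
  simp
  ring

/-- `E₄ E₆ / Δ` -/
lemma E46_QK : QK KQ 1 (fun τ => ModularForm.E₄ τ * ModularForm.E₆ τ / ModularForm.discriminant τ) :=
  (E4_QK.mul E6_QK).div one_pos disc_QK

lemma E_tendsto {k : ℕ} (hk : 3 ≤ k) (hk2 : Even k) :
    Tendsto (ModularForm.E hk) atImInfty (𝓝 1) := by
  have h1 := ModularFormClass.analyticAt_cuspFunction_zero (ModularForm.E hk) one_pos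
    one_mem_strictPeriods_SL
  have h0 : cuspFunction 1 (ModularForm.E hk) 0 = 1 := by
    have := EisensteinSeries.E_qExpansion_coeff hk hk2 0
    simpa [UpperHalfPlane.qExpansion_coeff] using this
  have h2 := h1.continuousAt.tendsto.comp
    ((qParam_tendsto_atImInfty one_pos).mono_right le_rfl)
  rw [h0] at h2
  refine h2.congr fun τ => ?_
  exact SlashInvariantFormClass.eq_cuspFunction _ τ one_mem_strictPeriods_SL one_ne_zero

lemma disc_tendsto :
    Tendsto (fun τ => ModularForm.discriminant τ * qpow 1 (-1) τ) atImInfty (𝓝 1) := by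
  refine ModularForm.tendsto_atImInfty_tprod_one_sub_eta_q_pow.congr fun τ => ?_
  rw [ModularForm.discriminant_eq_q_prod, qpow_eq_zpow, _root_.zpow_neg_one, qpow_one_eq]
  have : Function.Periodic.qParam ((1 : ℕ) : ℝ) τ ≠ 0 := by
    rw [← qpow_one_eq]; exact qpow_ne_zero _ _ _
  field_simp
  simp

lemma jinv_tendsto : Tendsto (fun τ => jinv τ * qpow 1 1 τ) atImInfty (𝓝 1) := by
  have h := ((E_tendsto (k := 4) (by norm_num) (by decide)).pow 3).div disc_tendsto one_ne_zero
  simp only [one_pow, div_one] at h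
  refine h.congr fun τ => ?_
  simp only [Pi.div_apply]
  rw [jinv_eq, qpow_eq_zpow 1 (-1), _root_.zpow_neg_one]
  have := ModularForm.discriminant_ne_zero τ
  have := qpow_ne_zero 1 1 τ
  field_simp

lemma E46_tendsto : Tendsto (fun τ => ModularForm.E₄ τ * ModularForm.E₆ τ /
    ModularForm.discriminant τ * qpow 1 1 τ) atImInfty (𝓝 1) := by
  have h := ((E_tendsto (k := 4) (by norm_num) (by decide)).mul
    (E_tendsto (k := 6) (by norm_num) (by decide))).div disc_tendsto one_ne_zero
  simp only [mul_one, div_one] at h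
  refine h.congr fun τ => ?_
  simp only [Pi.div_apply]
  rw [qpow_eq_zpow 1 (-1), _root_.zpow_neg_one]
  have := ModularForm.discriminant_ne_zero τ
  have := qpow_ne_zero 1 1 τ
  field_simp

/-- holomorphy of a function on `ℍ`. -/
def Hol (F : ℍ → ℂ) : Prop := DifferentiableOn ℂ (extH F) {z | 0 < z.im}

lemma extH_coe (F : ℍ → ℂ) (τ : ℍ) : extH F τ = F τ := by
  have : 0 < (τ : ℂ).im := τ.im_pos
  unfold extH
  rw [dif_pos this]

lemma Hol_iff (F : ℍ → ℂ) : Hol F ↔ MDifferentiable 𝓘(ℂ) 𝓘(ℂ) F := by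
  rw [UpperHalfPlane.mdifferentiable_iff]
  refine differentiableOn_congr fun z hz => ?_
  have : 0 < z.im := hz
  simp [extH, this, UpperHalfPlane.ofComplex_apply_of_im_pos this]

lemma Hol.mul {F G : ℍ → ℂ} (h : Hol F) (h' : Hol G) : Hol (F * G) := by
  rw [Hol_iff] at *; exact h.mul h'
lemma Hol.add {F G : ℍ → ℂ} (h : Hol F) (h' : Hol G) : Hol (F + G) := by
  rw [Hol_iff] at *; exact h.add h'
lemma Hol.neg {F : ℍ → ℂ} (h : Hol F) : Hol (-F) := by
  rw [Hol_iff] at *; exact h.neg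
lemma Hol.const (c : ℂ) : Hol (fun _ => c) := by
  rw [Hol_iff]; exact mdifferentiable_const
lemma Hol.div {F G : ℍ → ℂ} (h : Hol F) (h' : Hol G) (h0 : ∀ τ, G τ ≠ 0) : Hol (F / G) := by
  refine (DifferentiableOn.div h h' fun z hz => ?_).congr fun z hz => ?_
  · have : 0 < z.im := hz
    simp [extH, this, h0]
  · have : 0 < z.im := hz
    simp [extH, this]

/-- ring of holomorphic functions -/
def HolR : Subring (ℍ → ℂ) where
  carrier := {F | Hol F}
  mul_mem' := Hol.mul
  one_mem' := Hol.const 1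
  add_mem' := Hol.add
  zero_mem' := Hol.const 0
  neg_mem' := Hol.neg

lemma E_Hol {k : ℕ} (hk : 3 ≤ k) : Hol (ModularForm.E hk) :=
  (Hol_iff _).2 (ModularForm.E hk).holo'

lemma disc_Hol : Hol ModularForm.discriminant := by
  have h : Hol ((⇑ModularForm.E₄ * ⇑ModularForm.E₄ * ⇑ModularForm.E₄ +
    -(⇑ModularForm.E₆ * ⇑ModularForm.E₆)) * (fun _ => ((1 / 1728 : ℚ) : ℂ))) :=
    ((((E_Hol _).mul (E_Hol _)).mul (E_Hol _)).add ((E_Hol _).mul (E_Hol _)).neg).mul (Hol.const _)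
  convert h using 1
  ext z
  rw [ModularForm.discriminant_eq_E₄_cube_sub_E₆_sq]
  simp
  ring

lemma jinv_Hol : Hol jinv := by
  have h : Hol ((⇑ModularForm.E₄ * ⇑ModularForm.E₄ * ⇑ModularForm.E₄) /
    ModularForm.discriminant) :=
    (((E_Hol _).mul (E_Hol _)).mul (E_Hol _)).div disc_Hol ModularForm.discriminant_ne_zero
  convert h using 1
  ext z
  rw [jinv_eq]
  simp
  ring

lemma E46_Hol :
    Hol (fun τ => ModularForm.E₄ τ * ModularForm.E₆ τ / ModularForm.discriminant τ) :=
  ((E_Hol _).mul (E_Hol _)).div disc_Hol ModularForm.discriminant_ne_zero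

/-! ### The Weierstrass function -/

/-- The period pair `(τ, 1)`. -/
def PP (τ : ℍ) : PeriodPair where
  ω₁ := τ
  ω₂ := 1
  indep := by
    rw [LinearIndependent.pair_iff]
    intro s t h
    have him := congrArg Complex.im h
    have hre := congrArg Complex.re h
    have hs : s = 0 := by
      simp at him
      rcases him with h | h
      · exact h
      · exact absurd h τ.im_pos.ne'
    subst hs
    simp at hre
    exact ⟨rfl, hre⟩

lemma lat_zero (τ : ℍ) : lat τ 0 = 0 := by simp [lat]

lemma PP_symm (τ : ℍ) (p : ℤ × ℤ) : (((PP τ).latticeEquivProd.symm p : (PP τ).lattice) : ℂ) = lat τ p := by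
  rw [PeriodPair.latticeEquiv_symm_apply]
  simp [lat, PP]

lemma wpC_eq_tsum (z : ℂ) (τ : ℍ) :
    wpC z τ = ∑' p : ℤ × ℤ, (((z - lat τ p) ^ 2)⁻¹ - ((lat τ p) ^ 2)⁻¹) := by
  have hs : Summable fun p : ℤ × ℤ => (((z - lat τ p) ^ 2)⁻¹ - ((lat τ p) ^ 2)⁻¹) := by
    have := ((PP τ).latticeEquivProd.symm.toEquiv.summable_iff).2
      ((PP τ).hasSum_weierstrassP z).summable
    refine this.congr fun p => ?_
    simp only [Function.comp]
    show (1 / (z - (((PP τ).latticeEquivProd.symm p : (PP τ).lattice) : ℂ)) ^ 2 -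
      1 / (((PP τ).latticeEquivProd.symm p : (PP τ).lattice) : ℂ) ^ 2) = _
    rw [PP_symm]
    simp
  rw [wpC, hs.tsum_eq_add_tsum_ite 0]
  congr 1
  · simp [lat_zero]
  · rw [← tsum_subtype_eq_of_support_subset (s := {p : ℤ × ℤ | p ≠ 0})]
    · refine tsum_congr fun p => ?_
      rw [if_neg p.2]
    · intro p hp hp0
      apply hp
      simp [show p = 0 from hp0]

lemma wpC_eq (z : ℂ) (τ : ℍ) : wpC z τ = (PP τ).weierstrassP z := by
  rw [wpC_eq_tsum, PeriodPair.weierstrassP, ← (PP τ).latticeEquivProd.symm.toEquiv.tsum_eq]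
  refine tsum_congr fun p => ?_
  show _ = (1 / (z - (((PP τ).latticeEquivProd.symm p : (PP τ).lattice) : ℂ)) ^ 2 -
      1 / (((PP τ).latticeEquivProd.symm p : (PP τ).lattice) : ℂ) ^ 2)
  rw [PP_symm]
  simp

lemma wpC_hasSum (z : ℂ) (τ : ℍ) :
    HasSum (fun p : ℤ × ℤ => (((z - lat τ p) ^ 2)⁻¹ - ((lat τ p) ^ 2)⁻¹)) (wpC z τ) := by
  rw [wpC_eq]
  have := ((PP τ).latticeEquivProd.symm.toEquiv.hasSum_iff).2
      ((PP τ).hasSum_weierstrassP z)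
  refine this.congr_fun fun p => ?_
  show _ = (1 / (z - (((PP τ).latticeEquivProd.symm p : (PP τ).lattice) : ℂ)) ^ 2 -
      1 / (((PP τ).latticeEquivProd.symm p : (PP τ).lattice) : ℂ) ^ 2)
  rw [PP_symm]
  simp

lemma wpC_add (z : ℂ) (τ : ℍ) (p : ℤ × ℤ) : wpC (z + lat τ p) τ = wpC z τ := by
  rw [wpC_eq, wpC_eq, ← PP_symm, PeriodPair.weierstrassP_add_coe]

lemma wpC_neg (z : ℂ) (τ : ℍ) : wpC (-z) τ = wpC z τ := by
  rw [wpC_eq, wpC_eq, PeriodPair.weierstrassP_neg]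

/-- The action on the lattice indices. -/
def actE (γ : SL(2, ℤ)) : ℤ × ℤ ≃ ℤ × ℤ where
  toFun p := (p.1 * γ 0 0 + p.2 * γ 1 0, p.1 * γ 0 1 + p.2 * γ 1 1)
  invFun p := (p.1 * γ 1 1 - p.2 * γ 1 0, - p.1 * γ 0 1 + p.2 * γ 0 0)
  left_inv p := by
    have h := Matrix.det_fin_two γ.1
    rw [γ.2] at h
    ext
    · simp only
      linear_combination (-p.1) * h
    · simp only
      linear_combination (-p.2) * h
  right_inv p := by
    have h := Matrix.det_fin_two γ.1
    rw [γ.2] at h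
    ext
    · simp only
      linear_combination (-p.1) * h
    · simp only
      linear_combination (-p.2) * h

lemma lin_smul (γ : SL(2, ℤ)) (τ : ℍ) (x y : ℂ) :
    x * ((γ • τ : ℍ) : ℂ) + y =
      ((x * γ 0 0 + y * γ 1 0) * τ + (x * γ 0 1 + y * γ 1 1)) / denom γ τ := by
  rw [UpperHalfPlane.specialLinearGroup_apply]
  have h := denom_ne γ τ
  have e : denom γ τ = (γ 1 0 : ℂ) * τ + γ 1 1 := by
    simp [denom]
  rw [e] at h ⊢
  rw [eq_div_iff h]
  simp
  rw [add_mul, mul_assoc, div_mul_cancel₀ _ h]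
  ring

lemma wpC_smul (γ : SL(2, ℤ)) (τ : ℍ) (z : ℂ) :
    wpC (z / denom γ τ) (γ • τ) = denom γ τ ^ 2 * wpC z τ := by
  rw [wpC_eq_tsum, wpC_eq_tsum z, ← (actE γ).tsum_eq (fun p => ((z - lat τ p) ^ 2)⁻¹ - ((lat τ p) ^ 2)⁻¹), ← tsum_mul_left]
  refine tsum_congr fun p => ?_
  have e : lat (γ • τ) p = lat τ (actE γ p) / denom γ τ := by
    rw [lat, lin_smul]
    simp [lat, actE]
  have h := denom_ne γ τ
  rw [e, ← sub_div, div_pow, div_pow, inv_div, inv_div]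
  ring

lemma fricke_smul (γ : SL(2, ℤ)) (τ : ℍ) (r : ℚ × ℚ) :
    fricke r (γ • τ) = fricke (tAct γ r) τ := by
  rw [fricke, fricke, g2C_smul, g3C_smul, discC_smul, lin_smul, wpC_smul]
  have h1 := denom_ne γ τ
  have h2 := discC_ne τ
  have e : ((r.1 : ℂ) * γ 0 0 + r.2 * γ 1 0) * τ + (r.1 * γ 0 1 + r.2 * γ 1 1) =
    ((tAct γ r).1 : ℂ) * τ + ((tAct γ r).2 : ℂ) := by
    simp [tAct]
    ring
  rw [e]
  field_simp

lemma fricke_congr (r s : ℚ × ℚ) (a b : ℤ) (h1 : s.1 = r.1 + a) (h2 : s.2 = r.2 + b) :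
    fricke s = fricke r := by
  ext τ
  rw [fricke, fricke, ← wpC_add ((r.1 : ℂ) * τ + r.2) τ (a, b), lat, h1, h2]
  congr 2
  push_cast
  ring

lemma fricke_neg (r : ℚ × ℚ) : fricke (-r) = fricke r := by
  ext τ
  rw [fricke, fricke, ← wpC_neg]
  congr 2
  simp
  ring

/-! ### The `q`-expansion of `℘` at division points -/

/-- One row of the lattice sum. -/
def Rw (u : ℂ) : ℂ := ∑' n : ℤ, ((u + n) ^ 2)⁻¹

lemma Rw_summable (u : ℂ) : Summable fun n : ℤ => ((u + n) ^ 2)⁻¹ := by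
  have := EisensteinSeries.linear_right_summable u 1 (k := 2) le_rfl
  refine this.congr fun n => ?_
  norm_cast
  simp

lemma Rw_neg (u : ℂ) : Rw (-u) = Rw u := by
  rw [Rw, Rw, ← (Equiv.neg ℤ).tsum_eq]
  refine tsum_congr fun n => ?_
  simp only [Equiv.neg_apply]
  push_cast
  congr 1
  ring

lemma Rw_zero : Rw 0 = π ^ 2 / 3 := by
  have h : HasSum (fun n : ℤ => ((0 + (n : ℂ)) ^ 2)⁻¹) (Rw 0) := (Rw_summable 0).hasSum
  have h2 := h.nat_add_neg
  simp only [Int.cast_zero, add_zero, zero_add, ne_eq, OfNat.ofNat_ne_zero, not_false_eq_true, zero_pow,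
    _root_.inv_zero, add_zero] at h2
  have h3 := h2.tsum_eq
  have h4 := zeta_nat_eq_tsum_of_gt_one (k := 2) (by norm_num)
  rw [← h3]
  have h5 := riemannZeta_two
  have : ((2 : ℕ) : ℂ) = 2 := by norm_num
  rw [this, h5] at h4
  have e : ∀ n : ℕ, ((((n : ℤ) : ℂ) ^ 2)⁻¹ + (((-(n : ℤ) : ℤ) : ℂ) ^ 2)⁻¹) =
    2 * (1 / (n : ℂ) ^ 2) := by
    intro n; push_cast; rw [neg_sq]; ring
  rw [tsum_congr e, tsum_mul_left, ← h4]
  ring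

lemma Rw_real (x : ℝ) : Rw x ≠ 0 := by
  have e : Rw x = ((∑' n : ℤ, ((x + n) ^ 2)⁻¹ : ℝ) : ℂ) := by
    rw [Rw, Complex.ofReal_tsum]
    refine tsum_congr fun n => ?_
    push_cast
    rfl
  have hs : Summable fun n : ℤ => ((x + n) ^ 2)⁻¹ := by
    have := Rw_summable x
    rw [← Complex.summable_ofReal]
    refine this.congr fun n => ?_
    push_cast
    rfl
  rw [e]
  obtain ⟨i, hi⟩ : ∃ i : ℤ, x + i ≠ 0 := by
    by_cases h0 : x = 0
    · exact ⟨1, by simp [h0]⟩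
    · exact ⟨0, by simpa using h0⟩
  have : 0 < ∑' n : ℤ, ((x + n) ^ 2)⁻¹ :=
    hs.tsum_pos (fun n => by positivity) i (by positivity)
  exact_mod_cast this.ne'

lemma Rw_upper (u : ℂ) (hu : 0 < u.im) : Rw u / (2 * π * Complex.I) ^ 2 =
    ∑' l : ℕ+, (l : ℂ) * Complex.exp (2 * π * Complex.I * u) ^ (l : ℕ) := by
  have h := EisensteinSeries.qExpansion_identity_pnat (k := 1) le_rfl ⟨u, hu⟩
  have e : Rw u = ∑' n : ℤ, 1 / ((((⟨u, hu⟩ : ℍ)) : ℂ) + n) ^ (1 + 1) := by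
    rw [Rw]
    refine tsum_congr fun n => ?_
    simp
  rw [e, h]
  have := pi_ne
  have := Complex.I_ne_zero
  simp only [pow_one, Nat.factorial_one, Nat.cast_one, div_one]
  rw [mul_comm, mul_div_assoc, show (-2 * (π : ℂ) * Complex.I) ^ (1 + 1) = (2 * π * Complex.I) ^ 2 by ring,
    div_self (by simp), mul_one]

lemma row_hasSum (z : ℂ) (τ : ℍ) (k : ℤ) :
    HasSum (fun n : ℤ => (((z - lat τ (k, n)) ^ 2)⁻¹ - ((lat τ (k, n)) ^ 2)⁻¹))
      (Rw (z - k * τ) - Rw (k * τ)) := by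
  refine HasSum.sub ?_ ?_
  · have := (Rw_summable (z - k * τ)).hasSum
    rw [← (Equiv.neg ℤ).hasSum_iff] at this
    refine this.congr_fun fun n => ?_
    simp only [Function.comp, Equiv.neg_apply, lat]
    push_cast
    congr 2
    ring
  · exact (Rw_summable (k * τ)).hasSum

lemma wp_rows (z : ℂ) (τ : ℍ) :
    HasSum (fun k : ℕ+ => Rw (k * τ - z) + Rw (k * τ + z) - 2 * Rw (k * τ))
      (wpC z τ - (Rw z - π ^ 2 / 3)) := by
  have h := (wpC_hasSum z τ).prod_fiberwise (row_hasSum z τ)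
  have h2 := h.nat_add_neg
  rw [← hasSum_nat_add_iff' 1] at h2
  rw [← Equiv.pnatEquivNat.symm.hasSum_iff]
  have h3 := h2.congr_fun (g := (fun k : ℕ+ => Rw (k * τ - z) + Rw (k * τ + z) - 2 * Rw (k * τ)) ∘
    Equiv.pnatEquivNat.symm) fun n => ?_
  swap
  · simp only [Function.comp]
    have e : (((Equiv.pnatEquivNat.symm n : ℕ+) : ℕ) : ℂ) = n + 1 := by
      simp [Equiv.pnatEquivNat]
    rw [e]
    push_cast
    have e1 : Rw (((n : ℂ) + 1) * τ - z) = Rw (z - (n + 1) * τ) := by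
      rw [← Rw_neg]; congr 1; ring
    have e2 : Rw (-((n : ℂ) + 1) * τ) = Rw ((n + 1) * τ) := by
      rw [← Rw_neg]; congr 1; ring
    have e3 : Rw (z - -((n : ℂ) + 1) * τ) = Rw ((n + 1) * τ + z) := by
      congr 1; ring
    simp only [neg_add_rev, ← sub_eq_add_neg] at *
    rw [e1, e2, e3]
    ring
  · refine (fun {f : ℕ → ℂ} {a b : ℂ} (h : HasSum f a) (e : b = a) => e ▸ h :
      ∀ {f : ℕ → ℂ} {a b : ℂ}, HasSum f a → b = a → HasSum f b) h3 ?_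
    simp [Rw_zero]

lemma dser_fin (e : ℕ+ × ℕ+ → ℕ) (he : ∀ p, (p.1 * p.2 : ℕ) ≤ e p) (n : ℕ) :
    {p | e p = n}.Finite := by
  refine Set.Finite.subset (Set.Finite.prod (Set.finite_Iic (⟨n + 1, by omega⟩ : ℕ+))
    (Set.finite_Iic (⟨n + 1, by omega⟩ : ℕ+))) ?_
  intro (p : ℕ+ × ℕ+) h
  have h1 := he p
  have h2 : e p = n := h
  rw [h2] at h1
  have hk := p.1.pos
  have hl := p.2.pos
  constructor
  · show (p.1 : ℕ) ≤ n + 1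
    nlinarith
  · show (p.2 : ℕ) ≤ n + 1
    nlinarith

lemma dser_sum (c : ℕ+ × ℕ+ → ℂ) (e : ℕ+ × ℕ+ → ℕ) (hb : ∀ p, ‖c p‖ ≤ p.2)
    (he : ∀ p, (p.1 * p.2 : ℕ) ≤ e p) (z : ℂ) (hz : ‖z‖ < 1) :
    Summable fun p => c p * z ^ e p := by
  have h := summable_prod_mul_pow (𝕜 := ℝ) 1 (r := ‖z‖) (by simpa using hz)
  refine Summable.of_norm_bounded h fun p => ?_
  rw [norm_mul, norm_pow, pow_one]
  exact mul_le_mul (hb p) (pow_le_pow_of_le_one (norm_nonneg _) hz.le (he p)) (by positivity)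
    (by positivity)

lemma dser_deriv (c : ℕ+ × ℕ+ → ℂ) (e : ℕ+ × ℕ+ → ℕ) (hb : ∀ p, ‖c p‖ ≤ p.2)
    (he : ∀ p, (p.1 * p.2 : ℕ) ≤ e p) :
    (∑' p, c p * (0 : ℂ) ^ e p = 0) ∧
    ((∀ p, e p ≠ 1) → HasDerivAt (fun z => ∑' p, c p * z ^ e p) 0 0) ∧
    ((∀ p, e p = 1 ↔ p = (1, 1)) → HasDerivAt (fun z => ∑' p, c p * z ^ e p) (c (1, 1)) 0) := by
  obtain ⟨a, ha, -, h⟩ := gen_series (K := ⊤) c e (fun _ => trivial) (dser_fin e he)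
    (dser_sum c e hb he)
  have hd : HasDerivAt (fun z => ∑' p, c p * z ^ e p) (a 1) 0 := by
    have h1 := h.hasFPowerSeriesAt.hasDerivAt
    simpa [FormalMultilinearSeries.ofScalars_apply_eq] using h1
  refine ⟨?_, ?_, ?_⟩
  · have : ∀ p, c p * (0 : ℂ) ^ e p = 0 := by
      intro p
      have h1 := he p
      have h2 := Nat.mul_pos p.1.pos p.2.pos
      rw [zero_pow (by omega), mul_zero]
    simp [this]
  · intro h1
    have : a 1 = 0 := by
      rw [ha]
      refine Finset.sum_eq_zero fun p hp => ?_
      simp at hp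
      exact absurd hp (h1 p)
    rwa [this] at hd
  · intro h1
    have : a 1 = c (1, 1) := by
      rw [ha]
      refine Finset.sum_eq_single _ (fun p hp hp2 => ?_) fun hp => ?_
      · simp at hp
        exact absurd ((h1 p).1 hp) hp2
      · simp [h1] at hp
    rwa [this] at hd

/-- The double series occurring in the expansion of `℘`. -/
def DS (w : ℂ) (f : ℕ+ → ℕ) (z : ℂ) : ℂ :=
  ∑' p : ℕ+ × ℕ+, ((p.2 : ℂ) * w ^ (p.2 : ℕ)) * z ^ (f p.1 * p.2)

section DS

variable {w : ℂ} {f : ℕ+ → ℕ}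

lemma DS_b (hw : ‖w‖ = 1) (p : ℕ+ × ℕ+) : ‖(p.2 : ℂ) * w ^ (p.2 : ℕ)‖ ≤ p.2 := by
  simp [hw]

lemma DS_e (hf : ∀ k : ℕ+, (k : ℕ) ≤ f k) (p : ℕ+ × ℕ+) : (p.1 * p.2 : ℕ) ≤ f p.1 * p.2 :=
  Nat.mul_le_mul_right _ (hf _)

lemma DS_diff (hw : ‖w‖ = 1) (hf : ∀ k : ℕ+, (k : ℕ) ≤ f k) :
    DifferentiableOn ℂ (DS w f) (Metric.ball 0 1) :=
  gen_series_diff _ _ (dser_fin _ (DS_e hf)) (dser_sum _ _ (DS_b hw) (DS_e hf))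

lemma DS_KAn {K : Subfield ℂ} (hwK : w ∈ K) (hw : ‖w‖ = 1) (hf : ∀ k : ℕ+, (k : ℕ) ≤ f k) :
    KAn K (DS w f) :=
  gen_series_KAn _ _ (fun p => K.mul_mem (natCast_memK K _) (K.pow_mem hwK _))
    (dser_fin _ (DS_e hf)) (dser_sum _ _ (DS_b hw) (DS_e hf))

lemma DS_zero (hw : ‖w‖ = 1) (hf : ∀ k : ℕ+, (k : ℕ) ≤ f k) : DS w f 0 = 0 :=
  (dser_deriv _ _ (DS_b hw) (DS_e hf)).1

lemma DS_deriv0 (hw : ‖w‖ = 1) (hf : ∀ k : ℕ+, (k : ℕ) ≤ f k) (h1 : ∀ k, f k ≠ 1) :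
    HasDerivAt (DS w f) 0 0 :=
  (dser_deriv _ _ (DS_b hw) (DS_e hf)).2.1 fun p hp => h1 p.1 (Nat.eq_one_of_mul_eq_one_right hp)

lemma DS_deriv1 (hw : ‖w‖ = 1) (hf : ∀ k : ℕ+, (k : ℕ) ≤ f k) (h1 : ∀ k, f k = 1 ↔ k = 1) :
    HasDerivAt (DS w f) w 0 := by
  have := (dser_deriv _ _ (DS_b hw) (DS_e hf)).2.2 fun p => by
    rw [mul_eq_one, h1, Prod.ext_iff]
    simp
  simpa using! this

lemma DS_hasSum (hw : ‖w‖ = 1) (hf : ∀ k : ℕ+, (k : ℕ) ≤ f k) (z : ℂ) (hz : ‖z‖ < 1) :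
    HasSum (fun k : ℕ+ => ∑' l : ℕ+, (l : ℂ) * (w * z ^ f k) ^ (l : ℕ)) (DS w f z) := by
  have h := dser_sum _ _ (DS_b hw) (DS_e hf) z hz
  have h2 := h.hasSum.prod_fiberwise fun k => (h.prod_factor k).hasSum
  refine h2.congr_fun fun k => tsum_congr fun l => ?_
  simp only
  rw [mul_pow, ← pow_mul]
  ring

end DS

/-- The leading term of the expansion. -/
def X0 (m a : ℕ) (b : ℤ) (z : ℂ) : ℂ :=
  if a = 0 then Rw (b / m) / (2 * π * Complex.I) ^ 2 else
    (Complex.exp (2 * π * Complex.I * (b / m)) * z ^ a) /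
      (1 - Complex.exp (2 * π * Complex.I * (b / m)) * z ^ a) ^ 2

/-- The power series of `℘/(2πi)²` at a division point. -/
def Phi (m a : ℕ) (b : ℤ) (z : ℂ) : ℂ :=
  1 / 12 + X0 m a b z + DS (Complex.exp (2 * π * Complex.I * (b / m)))⁻¹ (fun k => m * k - a) z +
    DS (Complex.exp (2 * π * Complex.I * (b / m))) (fun k => m * k + a) z -
      2 * DS 1 (fun k => m * k) z

lemma w0_norm (m : ℕ) (b : ℤ) : ‖Complex.exp (2 * π * Complex.I * (b / m))‖ = 1 := by
  rw [show (2 * π * Complex.I * (b / m) : ℂ) = ((2 * π * (b / m) : ℝ) : ℂ) * Complex.I by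
    push_cast; ring]
  exact Complex.norm_exp_ofReal_mul_I _

section Phi

variable {m a : ℕ}

lemma f1_le (hm : 1 < m) (ha : a < m) (k : ℕ+) : (k : ℕ) ≤ m * k - a := by
  have := k.pos
  have : (k : ℕ) + a ≤ m * k := by nlinarith
  omega

lemma f2_le (hm : 1 < m) (ha : a < m) (k : ℕ+) : (k : ℕ) ≤ m * k + a := by
  have := k.pos
  nlinarith

lemma f3_le (hm : 1 < m) (ha : a < m) (k : ℕ+) : (k : ℕ) ≤ m * k := by
  have := k.pos
  nlinarith

lemma Phi_diff (hm : 1 < m) (ha : a < m) (b : ℤ) : DifferentiableOn ℂ (Phi m a b) (Metric.ball 0 1) := by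
  have hw := w0_norm m b
  have h1 := DS_diff (w := (Complex.exp (2 * π * Complex.I * (b / m)))⁻¹) (by rw [norm_inv, hw, inv_one])
    (f1_le hm ha)
  have h2 := DS_diff hw (f2_le hm ha)
  have h3 := DS_diff (w := 1) (by simp) (f3_le hm ha)
  have h0 : DifferentiableOn ℂ (X0 m a b) (Metric.ball 0 1) := by
    unfold X0
    split_ifs with h
    · exact differentiableOn_const _
    · refine DifferentiableOn.div (by fun_prop) (by fun_prop) fun z hz => ?_
      refine pow_ne_zero _ fun e => ?_
      have e2 := congrArg norm (sub_eq_zero.1 e)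
      rw [norm_mul, hw, one_mul, norm_pow, norm_one] at e2
      have hz' : ‖z‖ < 1 := by simpa using hz
      have := pow_lt_one₀ (norm_nonneg z) hz' h
      linarith
  exact ((((differentiableOn_const _).add h0).add h1).add h2).sub ((differentiableOn_const 2).mul h3)

lemma X0_KAn {K : Subfield ℂ} (hm : 1 < m) (ha : a < m) (b : ℤ) (hK : Complex.exp (2 * π * Complex.I * (b / m)) ∈ K)
    (h0 : a = 0 → K = ⊤) : KAn K (X0 m a b) := by
  unfold X0
  split_ifs with h
  · rw [h0 h]; exact KAn.const trivial
  · have h1 : KAn K (fun z => Complex.exp (2 * π * Complex.I * (b / m)) * z ^ a) :=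
      (KAn.const hK).mul (KAn.id.pow a)
    have h2 : KAn K ((fun z => 1 + -(Complex.exp (2 * π * Complex.I * (b / m)) * z ^ a)) ^ 2) :=
      ((KAn.const K.one_mem).add h1.neg).pow 2
    have h3 := h1.mul (h2.inv (by simp [h]))
    refine h3.congr (Eventually.of_forall fun z => ?_)
    simp [div_eq_mul_inv, sub_eq_add_neg]

lemma Phi_KAn {K : Subfield ℂ} (hm : 1 < m) (ha : a < m) (b : ℤ) (hK : Complex.exp (2 * π * Complex.I * (b / m)) ∈ K)
    (h0 : a = 0 → K = ⊤) : KAn K (Phi m a b) := by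
  have hw := w0_norm m b
  have h1 := DS_KAn (w := (Complex.exp (2 * π * Complex.I * (b / m)))⁻¹) (K.inv_mem hK)
    (by rw [norm_inv, hw, inv_one]) (f1_le hm ha)
  have h2 := DS_KAn hK hw (f2_le hm ha)
  have h3 := DS_KAn (K := K) (w := 1) K.one_mem (by simp) (f3_le hm ha)
  have hc : (1 / 12 : ℂ) ∈ K := K.div_mem K.one_mem (by exact_mod_cast natCast_memK K 12)
  have hc2 : (-2 : ℂ) ∈ K := K.neg_mem (by exact_mod_cast natCast_memK K 2)
  have := ((((KAn.const hc).add (X0_KAn hm ha b hK h0)).add h1).add h2).add ((KAn.const hc2).mul h3)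
  refine this.congr (Eventually.of_forall fun z => ?_)
  simp [Phi]
  ring

lemma Phi_zero (hm : 1 < m) (ha : a < m) (b : ℤ) : Phi m a b 0 = 1 / 12 +
    (if a = 0 then Rw (b / m) / (2 * π * Complex.I) ^ 2 else 0) := by
  have hw := w0_norm m b
  rw [Phi, DS_zero (w := (Complex.exp (2 * π * Complex.I * (b / m)))⁻¹) (by rw [norm_inv, hw, inv_one])
    (f1_le hm ha), DS_zero hw (f2_le hm ha), DS_zero (w := 1) (by simp) (f3_le hm ha), X0]
  split_ifs with h
  · simp
  · simp [h]

lemma Phi_deriv (hm : 1 < m) (ha : a < m) (b : ℤ) (h0 : a ≠ 0) : HasDerivAt (Phi m a b)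
    ((if a = 1 then Complex.exp (2 * π * Complex.I * (b / m)) else 0) +
    (if a + 1 = m then (Complex.exp (2 * π * Complex.I * (b / m)))⁻¹ else 0)) 0 := by
  have hw := w0_norm m b
  have h1 : HasDerivAt (DS (Complex.exp (2 * π * Complex.I * (b / m)))⁻¹ (fun k => m * k - a))
     (if a + 1 = m then (Complex.exp (2 * π * Complex.I * (b / m)))⁻¹ else 0) 0 := by
    split_ifs with h
    · refine DS_deriv1 (by rw [norm_inv, hw, inv_one]) (f1_le hm ha) fun k => ?_
      constructor
      · intro (e : m * k - a = 1)
        have hk := k.pos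
        have : m * k ≤ m := by omega
        have h2 : (k : ℕ) ≤ 1 := by
          by_contra hc
          nlinarith
        exact PNat.eq (by have : ((1 : ℕ+) : ℕ) = 1 := rfl
                          omega)
      · rintro rfl
        simp; omega
    · refine DS_deriv0 (by rw [norm_inv, hw, inv_one]) (f1_le hm ha) fun k (e : _ = 1) => ?_
      have hk := k.pos
      have : m ≤ m * k := Nat.le_mul_of_pos_right m hk
      omega
  have h2 : HasDerivAt _ _ _ := DS_deriv0 hw (f2_le hm ha) fun k (e : _ = 1) => by
    have : m ≤ m * k := Nat.le_mul_of_pos_right m k.pos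
    omega
  have h3 := DS_deriv0 (w := 1) (by simp) (f3_le hm ha) fun k (e : _ = 1) => by
    have : m ≤ m * k := Nat.le_mul_of_pos_right m k.pos
    omega
  have h4 : HasDerivAt (X0 m a b) (if a = 1 then Complex.exp (2 * π * Complex.I * (b / m)) else 0) 0 := by
    have hx : HasDerivAt (fun z : ℂ => Complex.exp (2 * π * Complex.I * (b / m)) * z ^ a)
        (if a = 1 then Complex.exp (2 * π * Complex.I * (b / m)) else 0) 0 := by
      have := (hasDerivAt_pow a (0 : ℂ)).const_mul (Complex.exp (2 * π * Complex.I * (b / m)))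
      refine this.congr_deriv ?_
      split_ifs with h
      · simp [h]
      · rw [zero_pow (by omega)]; simp
    have hx2 := hx.div ((hx.const_sub 1).pow 2) (by simp [h0])
    refine (hx2.congr_deriv ?_).congr_of_eventuallyEq (Eventually.of_forall fun z => ?_)
    · simp [h0]
    · simp [X0, h0]
  have := ((((hasDerivAt_const (0 : ℂ) (1 / 12 : ℂ)).add h4).add h1).add h2).sub (h3.const_mul 2)
  refine this.congr_deriv ?_
  ring

lemma Phi_eq (hm : 1 < m) (ha : a < m) (b : ℤ) (τ : ℍ) :
    wpC ((a / m : ℂ) * τ + b / m) τ / (2 * π * Complex.I) ^ 2 = Phi m a b (qpow m 1 τ) := by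
  have hw := w0_norm m b
  set Q := qpow m 1 τ with hQd
  set w := Complex.exp (2 * π * Complex.I * (b / m)) with hwd
  set z : ℂ := (a / m : ℂ) * τ + b / m with hz
  have hQ : ‖Q‖ < 1 := norm_qpow_lt m (by omega) τ
  have hm0 : (m : ℂ) ≠ 0 := by exact_mod_cast (by omega : m ≠ 0)
  have hmr : (0 : ℝ) < m := by exact_mod_cast (by omega : 0 < m)
  have hzim : z.im = a / m * τ.im := by
    have : z = ((a / m : ℝ) : ℂ) * τ + ((b / m : ℝ) : ℂ) := by rw [hz]; push_cast; ring
    rw [this, Complex.add_im, Complex.im_ofReal_mul, Complex.ofReal_im]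
    simp
  have hτ := τ.im_pos
  have ham : (a : ℝ) / m < 1 := by rw [div_lt_one hmr]; exact_mod_cast ha
  have hexp : ∀ n : ℕ, Q ^ n = Complex.exp (2 * π * Complex.I * (n / m) * τ) := by
    intro n
    rw [hQd, ← qpow_nat]
    simp [qpow]
  have r1 : ∀ k : ℕ+, Rw (k * τ - z) / (2 * π * Complex.I) ^ 2 =
      ∑' l : ℕ+, (l : ℂ) * (w⁻¹ * Q ^ (m * k - a)) ^ (l : ℕ) := by
    intro k
    have hk : (1 : ℝ) ≤ k := by exact_mod_cast k.pos
    rw [Rw_upper]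
    · have : Complex.exp (2 * π * Complex.I * (k * τ - z)) = w⁻¹ * Q ^ (m * k - a) := by
        have hle : a ≤ m * k := by have := f1_le hm ha k; have := k.pos; omega
        rw [hwd, ← Complex.exp_neg, hexp, ← Complex.exp_add]
        congr 1
        push_cast [Nat.cast_sub hle]
        rw [hz]
        field_simp
        ring
      rw [this]
    · rw [Complex.sub_im, hzim]
      have : ((k : ℂ) * (τ : ℂ)).im = k * τ.im := by simp
      rw [this]
      nlinarith
  have r2 : ∀ k : ℕ+, Rw (k * τ + z) / (2 * π * Complex.I) ^ 2 =
      ∑' l : ℕ+, (l : ℂ) * (w * Q ^ (m * k + a)) ^ (l : ℕ) := by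
    intro k
    have hk : (1 : ℝ) ≤ k := by exact_mod_cast k.pos
    rw [Rw_upper]
    · have : Complex.exp (2 * π * Complex.I * (k * τ + z)) = w * Q ^ (m * k + a) := by
        rw [hwd, hexp, ← Complex.exp_add]
        congr 1
        push_cast
        rw [hz]
        field_simp
        ring
      rw [this]
    · rw [Complex.add_im, hzim]
      have : ((k : ℂ) * (τ : ℂ)).im = k * τ.im := by simp
      rw [this]
      positivity
  have r3 : ∀ k : ℕ+, Rw (k * τ) / (2 * π * Complex.I) ^ 2 =
      ∑' l : ℕ+, (l : ℂ) * (1 * Q ^ (m * k)) ^ (l : ℕ) := by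
    intro k
    have hk : (1 : ℝ) ≤ k := by exact_mod_cast k.pos
    rw [Rw_upper]
    · have : Complex.exp (2 * π * Complex.I * (k * τ)) = 1 * Q ^ (m * k) := by
        rw [hexp, one_mul]
        congr 1
        push_cast
        field_simp
      rw [this]
    · have : ((k : ℂ) * (τ : ℂ)).im = k * τ.im := by simp
      rw [this]
      positivity
  have r0 : Rw z / (2 * π * Complex.I) ^ 2 = X0 m a b Q := by
    rw [X0]
    split_ifs with h
    · rw [hz, h]; simp
    · rw [Rw_upper]
      · have : Complex.exp (2 * π * Complex.I * z) = w * Q ^ a := by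
          rw [hwd, hexp, ← Complex.exp_add]
          congr 1
          rw [hz]
          field_simp
          ring
        rw [this, ← hwd]
        have hn : ‖w * Q ^ a‖ < 1 := by
          rw [norm_mul, hw, one_mul, norm_pow]
          exact pow_lt_one₀ (norm_nonneg _) hQ h
        rw [← tsum_coe_mul_geometric_of_norm_lt_one hn]
        rw [← tsum_zero_pnat_eq_tsum_nat]
        · simp
        · exact (hasSum_coe_mul_geometric_of_norm_lt_one hn).summable
      · rw [hzim]
        have : (0 : ℝ) < a := by exact_mod_cast (by omega : 0 < a)
        positivity
  have s1 := DS_hasSum (w := w⁻¹) (by rw [norm_inv, hw, inv_one]) (f1_le hm ha) Q hQ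
  have s2 := DS_hasSum hw (f2_le hm ha) Q hQ
  have s3 := DS_hasSum (w := 1) (by simp) (f3_le hm ha) Q hQ
  have s := (s1.add s2).sub (s3.mul_left 2)
  have t := (wp_rows z τ).div_const ((2 * π * Complex.I) ^ 2)
  have t2 := t.congr_fun (g := fun k : ℕ+ => ∑' l : ℕ+, (l : ℂ) * (w⁻¹ * Q ^ (m * k - a)) ^ (l : ℕ) +
    ∑' l : ℕ+, (l : ℂ) * (w * Q ^ (m * k + a)) ^ (l : ℕ) -
    2 * ∑' l : ℕ+, (l : ℂ) * (1 * Q ^ (m * k)) ^ (l : ℕ)) fun k => by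
      rw [← r1, ← r2, ← r3]; ring
  have u := s.unique t2
  rw [Phi, ← r0, ← hwd]
  have hpi := pi_ne
  have hI : (2 * π * Complex.I) ^ 2 ≠ (0 : ℂ) := by
    have := Complex.I_ne_zero
    simp [hpi]
  have e12 : (π ^ 2 / 3 : ℂ) / (2 * π * Complex.I) ^ 2 = - (1 / 12) := by
    rw [mul_pow, Complex.I_sq]
    field_simp
    norm_num
  have : wpC z τ / (2 * π * Complex.I) ^ 2 = (wpC z τ - (Rw z - π ^ 2 / 3)) / (2 * π * Complex.I) ^ 2
      + Rw z / (2 * π * Complex.I) ^ 2 - (π ^ 2 / 3 : ℂ) / (2 * π * Complex.I) ^ 2 := by ring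
  rw [this, e12, ← u]
  ring

end Phi

/-! ### Fricke functions at division points -/

lemma Phi_Hol {m a : ℕ} (hm : 1 < m) (ha : a < m) (b : ℤ) :
    Hol (fun τ => Phi m a b (qpow m 1 τ)) := by
  have h : DifferentiableOn ℂ
      (fun z : ℂ => Phi m a b (Complex.exp (2 * π * Complex.I * (((1 : ℤ) : ℂ) / m) * z)))
      {z | 0 < z.im} := by
    refine (Phi_diff hm ha b).comp (by fun_prop) fun z hz => ?_
    have := norm_qpow_lt m (by omega) ⟨z, hz⟩
    simpa [qpow] using this
  refine h.congr fun z hz => ?_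
  rw [extH, dif_pos (show 0 < z.im from hz)]
  rfl

lemma fricke_form {m a : ℕ} (hm : 1 < m) (ha : a < m) (b : ℤ) (τ : ℍ) :
    fricke ((a : ℚ) / m, (b : ℚ) / m) τ =
      12 * (ModularForm.E₄ τ * ModularForm.E₆ τ / ModularForm.discriminant τ) *
        Phi m a b (qpow m 1 τ) := by
  rw [fricke_eq, ← Phi_eq hm ha]
  push_cast
  rfl

lemma fricke_red {m : ℕ} (hm : 1 < m) (a b : ℤ) : ∃ a' : ℕ, a' < m ∧ (m : ℤ) ∣ a - a' ∧
    fricke ((a : ℚ) / m, (b : ℚ) / m) = fricke ((a' : ℚ) / m, (b : ℚ) / m) := by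
  have hm0 : (m : ℤ) ≠ 0 := by omega
  have h1 := Int.emod_nonneg a hm0
  have h2 := Int.emod_lt_of_pos a (show (0 : ℤ) < m by omega)
  have h3 : (((a % m).toNat : ℕ) : ℤ) = a % m := Int.toNat_of_nonneg h1
  refine ⟨(a % m).toNat, by omega, ?_, ?_⟩
  · rw [h3]; exact Int.dvd_self_sub_emod
  · refine fricke_congr _ _ (a / m) 0 ?_ ?_
    · have h4 : (((a % m).toNat : ℕ) : ℚ) = ((a % m : ℤ) : ℚ) := by exact_mod_cast h3
      have h5 : (a : ℚ) = ((a % m : ℤ) : ℚ) + m * ((a / m : ℤ) : ℚ) := by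
        exact_mod_cast (Int.emod_add_mul_ediv a m).symm
      have : (m : ℚ) ≠ 0 := by exact_mod_cast hm0
      rw [h4]
      simp only
      rw [h5]
      field_simp
    · simp

lemma fricke_Hol {m : ℕ} (hm : 1 < m) (a b : ℤ) :
    Hol (fricke ((a : ℚ) / m, (b : ℚ) / m)) := by
  obtain ⟨a', ha, -, e⟩ := fricke_red hm a b
  rw [e, funext (fricke_form hm ha b)]
  exact ((Hol.const 12).mul E46_Hol).mul (Phi_Hol hm ha b)

lemma fricke_QK {m : ℕ} (hm : 1 < m) (a b : ℤ) :
    QK ⊤ m (fricke ((a : ℚ) / m, (b : ℚ) / m)) := by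
  obtain ⟨a', ha, -, e⟩ := fricke_red hm a b
  rw [e, funext (fricke_form hm ha b)]
  exact ((QK.const (K := ⊤) (c := 12) trivial).mul ((QK.level (by omega) E46_QK).mono le_top)).mul
    (QK.of_KAn (Phi_KAn hm ha b trivial fun _ => rfl) (fun _ => rfl))

lemma fricke_one {m : ℕ} : fricke ((1 : ℚ) / m, 0) =
    fricke (((1 : ℕ) : ℚ) / m, ((0 : ℤ) : ℚ) / m) := by simp

lemma f_QK {m : ℕ} (hm : 1 < m) : QK KQ m (fricke ((1 : ℚ) / m, 0)) := by
  rw [fricke_one, funext (fricke_form hm hm 0)]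
  exact ((QK.const (c := 12) (by exact_mod_cast natCast_memK KQ 12)).mul
    (QK.level (by omega) E46_QK)).mul
    (QK.of_KAn (Phi_KAn hm hm 0 (by simp) (by simp)) (fun _ => rfl))

lemma f_smul (m : ℕ) (γ : SL(2, ℤ)) (τ : ℍ) : fricke ((1 : ℚ) / m, 0) (γ • τ) =
    fricke (((γ 0 0 : ℤ) : ℚ) / m, ((γ 0 1 : ℤ) : ℚ) / m) τ := by
  rw [fricke_smul, tAct]
  simp [div_eq_mul_inv]

lemma f_Hol {m : ℕ} (hm : 1 < m) (γ : SL(2, ℤ)) : Hol (fun τ => fricke ((1 : ℚ) / m, 0) (γ • τ)) := by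
  rw [funext (f_smul m γ)]
  exact fricke_Hol hm _ _

lemma f_QK' {m : ℕ} (hm : 1 < m) (γ : SL(2, ℤ)) :
    QK ⊤ m (fun τ => fricke ((1 : ℚ) / m, 0) (γ • τ)) := by
  rw [funext (f_smul m γ)]
  exact fricke_QK hm _ _

lemma f_inv {m : ℕ} (hm : 1 < m) (γ : SL(2, ℤ)) (hγ : GammaUpper m γ) (τ : ℍ) :
    fricke ((1 : ℚ) / m, 0) (γ • τ) = fricke ((1 : ℚ) / m, 0) τ := by
  rw [f_smul]
  obtain ⟨h1, h2, h3⟩ := hγ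
  have e1 : (m : ℤ) ∣ γ 0 0 - 1 := by
    rw [← ZMod.intCast_zmod_eq_zero_iff_dvd]
    push_cast
    rw [h1, sub_self]
  have e3 : (m : ℤ) ∣ γ 0 1 := by
    rw [← ZMod.intCast_zmod_eq_zero_iff_dvd]
    exact h3
  obtain ⟨x, hx⟩ := e1
  obtain ⟨y, hy⟩ := e3
  have hm0 : (m : ℚ) ≠ 0 := by exact_mod_cast (by omega : m ≠ 0)
  have hx' : ((γ 0 0 : ℤ) : ℚ) = m * x + 1 := by
    have : γ 0 0 = m * x + 1 := by omega
    rw [this]; push_cast; ring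
  refine congrFun (fricke_congr _ _ x y ?_ ?_) τ
  · simp only; rw [hx']; field_simp; ring
  · simp only; rw [hy]; push_cast; field_simp; ring

lemma fricke_sep {m : ℕ} (hm : 1 < m) (a b : ℤ)
    (h : fricke ((a : ℚ) / m, (b : ℚ) / m) =ᶠ[atImInfty] fricke ((1 : ℚ) / m, 0)) :
    (m : ℤ) ∣ b ∧ ((m : ℤ) ∣ a - 1 ∨ (m : ℤ) ∣ a + 1) := by
  obtain ⟨a', ha, hd, e⟩ := fricke_red hm a b
  have hm0 : (m : ℂ) ≠ 0 := by exact_mod_cast (by omega : m ≠ 0)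
  rw [e, fricke_one, funext (fricke_form hm ha b), funext (fricke_form hm hm 0)] at h
  have hE : ∀ᶠ τ in atImInfty, ModularForm.E₄ τ * ModularForm.E₆ τ / ModularForm.discriminant τ ≠ 0 := by
    filter_upwards [E46_tendsto.eventually_ne one_ne_zero] with τ hτ h0
    simp [h0] at hτ
  have hPhi : Phi m a' b =ᶠ[𝓝 0] Phi m 1 0 := by
    have han : AnalyticAt ℂ (fun z => Phi m a' b z - Phi m 1 0 z) 0 :=
      (Phi_KAn (K := ⊤) hm ha b trivial fun _ => rfl).1.sub
        (Phi_KAn (K := ⊤) hm hm 0 trivial fun _ => rfl).1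
    rcases han.eventually_eq_zero_or_eventually_ne_zero with h0 | h0
    · filter_upwards [h0] with z hz
      exact sub_eq_zero.1 hz
    · exfalso
      have h1 := (qpow_tendsto m (by omega)).eventually h0
      obtain ⟨τ, h2, h3, h4⟩ := (h1.and (h.and hE)).exists
      refine h2 (sub_eq_zero.2 ?_)
      exact mul_left_cancel₀ (mul_ne_zero (by norm_num) h4) h3
  have hval := hPhi.eq_of_nhds
  rw [Phi_zero hm ha, Phi_zero hm hm] at hval
  have ha0 : a' ≠ 0 := by
    rintro rfl
    have := Rw_real (b / m)
    have hpi := pi_ne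
    have hI := Complex.I_ne_zero
    push_cast at this
    simp [this, hpi] at hval
  have hder := ((Phi_deriv hm ha b ha0).congr_of_eventuallyEq hPhi.symm).unique
    (Phi_deriv hm hm 0 one_ne_zero)
  set w := Complex.exp (2 * π * Complex.I * (b / m)) with hw
  have hw0 : w ≠ 0 := Complex.exp_ne_zero _
  have key : w = 1 → (m : ℤ) ∣ b := by
    intro h1
    rw [hw, Complex.exp_eq_one_iff] at h1
    obtain ⟨n, hn⟩ := h1
    have hpi := pi_ne
    have hI := Complex.I_ne_zero
    have h2 : (b : ℂ) = m * n := by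
      field_simp at hn
      linear_combination hn
    exact ⟨n, by exact_mod_cast h2⟩
  simp only [if_true, Int.cast_zero, zero_div, mul_zero, Complex.exp_zero, inv_one] at hder
  by_cases h1 : a' = 1
  · subst h1
    refine ⟨key ?_, Or.inl (by simpa using hd)⟩
    by_cases h2 : 1 + 1 = m
    · simp only [h2, if_true] at hder
      field_simp at hder
      have : (w - 1) ^ 2 = 0 := by linear_combination hder
      exact sub_eq_zero.1 (pow_eq_zero_iff (two_ne_zero) |>.1 this)
    · simpa [h2] using hder
  · by_cases h2 : a' + 1 = m
    · have h3 : 1 + 1 ≠ m := by omega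
      simp only [h1, h2, h3, if_true, if_false, zero_add, add_zero] at hder
      refine ⟨key (inv_eq_one.1 hder), Or.inr ?_⟩
      obtain ⟨c, hc⟩ := hd
      exact ⟨c + 1, by rw [mul_add, ← hc]; omega⟩
    · exfalso
      simp only [h1, h2, if_false, add_zero] at hder
      split_ifs at hder <;> norm_num at hder

lemma GammaUpper_of {m : ℕ} (γ : SL(2, ℤ)) (h1 : (m : ℤ) ∣ γ 0 1) (h2 : (m : ℤ) ∣ γ 0 0 - 1) :
    GammaUpper m γ := by
  rw [← ZMod.intCast_zmod_eq_zero_iff_dvd] at h1 h2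
  push_cast at h2
  have hdet := γ.det_coe
  rw [Matrix.det_fin_two] at hdet
  have h3 := congrArg (fun x : ℤ => (x : ZMod m)) hdet
  push_cast at h3
  have h4 := sub_eq_zero.1 h2
  refine ⟨h4, ?_, h1⟩
  rw [h4, h1] at h3
  simpa using h3

lemma stab {m : ℕ} (hm : 1 < m) (γ : SL(2, ℤ))
    (h : (fun τ => fricke ((1 : ℚ) / m, 0) (γ • τ)) =ᶠ[atImInfty] fricke ((1 : ℚ) / m, 0)) :
    GammaUpper m γ ∨ GammaUpper m (-γ) := by
  rw [funext (f_smul m γ)] at h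
  obtain ⟨h1, h2 | h2⟩ := fricke_sep hm _ _ h
  · exact Or.inl (GammaUpper_of γ h1 h2)
  · refine Or.inr (GammaUpper_of (-γ) ?_ ?_)
    · simpa using h1
    · simp only [Matrix.SpecialLinearGroup.coe_neg, Matrix.neg_apply]
      rw [show -γ 0 0 - 1 = -(γ 0 0 + 1) by ring]
      exact (dvd_neg).2 h2

lemma stab_inv {m : ℕ} (hm : 1 < m) {h : ℍ → ℂ} (hh : ∀ γ : SL(2, ℤ), GammaUpper m γ → ∀ τ : ℍ, h (γ • τ) = h τ)
    (γ : SL(2, ℤ)) (e : (fun τ => fricke ((1 : ℚ) / m, 0) (γ • τ)) =ᶠ[atImInfty] fricke ((1 : ℚ) / m, 0))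
    (τ : ℍ) : h (γ • τ) = h τ := by
  rcases stab hm γ e with h1 | h1
  · exact hh γ h1 τ
  · have := hh _ h1 τ
    rwa [ModularGroup.SL_neg_smul] at this

lemma f_cong {m : ℕ} (hm : 1 < m) (γ δ : SL(2, ℤ)) (h : ∀ i j, ((γ i j : ℤ) : ZMod m) = ((δ i j : ℤ) : ZMod m))
    (τ : ℍ) : fricke ((1 : ℚ) / m, 0) (γ • τ) = fricke ((1 : ℚ) / m, 0) (δ • τ) := by
  rw [f_smul, f_smul]
  have hm0 : (m : ℚ) ≠ 0 := by exact_mod_cast (by omega : m ≠ 0)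
  have key : ∀ i j, ∃ x : ℤ, ((γ i j : ℤ) : ℚ) / m = ((δ i j : ℤ) : ℚ) / m + x := by
    intro i j
    obtain ⟨x, hx⟩ := (ZMod.intCast_eq_intCast_iff_dvd_sub _ _ _).1 (h i j).symm
    refine ⟨x, ?_⟩
    have : γ i j = δ i j + m * x := by omega
    rw [this]
    push_cast
    field_simp
  obtain ⟨x, hx⟩ := key 0 0
  obtain ⟨y, hy⟩ := key 0 1
  exact congrFun (fricke_congr _ _ x y hx hy) τ

/-! ### Level one: modular functions are rational functions of `j` -/

/-- Invariance under the full modular group. -/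
def Inv1 (F : ℍ → ℂ) : Prop := ∀ γ : SL(2, ℤ), ∀ τ : ℍ, F (γ • τ) = F τ

lemma jinv_Inv : Inv1 jinv := jinv_smul

lemma per_ofComplex {F : ℍ → ℂ} (h : ∀ τ : ℍ, F ((1 : ℝ) +ᵥ τ) = F τ) :
    Function.Periodic (F ∘ ofComplex) (1 : ℝ) := by
  intro w
  by_cases hw : 0 < w.im
  · have h1 : 0 < (w + (1 : ℝ)).im := by simpa using hw
    simp only [Function.comp, ofComplex_apply_of_im_pos h1, ofComplex_apply_of_im_pos hw]
    rw [← h ⟨w, hw⟩]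
    congr 1
    ext
    simp [add_comm]
  · have hw' : w.im ≤ 0 := not_lt.1 hw
    have h1 : (w + (1 : ℝ)).im ≤ 0 := by simpa using hw'
    simp only [Function.comp, ofComplex_apply_of_im_nonpos h1, ofComplex_apply_of_im_nonpos hw']

lemma cusp_exp {F : ℍ → ℂ} (hF : Hol F) (hp : ∀ τ : ℍ, F ((1 : ℝ) +ᵥ τ) = F τ)
    (hb : F =O[atImInfty] (1 : ℍ → ℝ)) :
    ∃ ψ : ℂ → ℂ, AnalyticAt ℂ ψ 0 ∧ ∀ τ, F τ = ψ (qpow 1 1 τ) := by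
  refine ⟨_, analyticAt_cuspFunction_zero one_pos (per_ofComplex hp) ((Hol_iff F).1 hF) hb,
    fun τ => ?_⟩
  rw [← eq_cuspFunction τ one_ne_zero (per_ofComplex hp), qpow_one_eq]
  simp

lemma Inv1.per {F : ℍ → ℂ} (h : Inv1 F) (τ : ℍ) : F ((1 : ℝ) +ᵥ τ) = F τ := by
  rw [← modular_T_smul, h]

lemma qpow_per (n : ℤ) (τ : ℍ) : qpow 1 n ((1 : ℝ) +ᵥ τ) = qpow 1 n τ := by
  simp only [qpow, coe_vadd, Nat.cast_one, div_one, ofReal_one]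
  rw [mul_add, Complex.exp_add, mul_one, mul_comm (2 * (π : ℂ) * Complex.I) (n : ℂ),
    Complex.exp_int_mul_two_pi_mul_I, one_mul]

lemma qpow_Hol (n : ℤ) : Hol (qpow 1 n) := by
  have h : DifferentiableOn ℂ (fun z : ℂ => Complex.exp (2 * π * Complex.I * ((n : ℂ) / ((1 : ℕ) : ℂ)) * z))
      {z | 0 < z.im} := by fun_prop
  refine h.congr fun z hz => ?_
  rw [extH, dif_pos (show 0 < z.im from hz)]
  rfl

open scoped ModularForm in
lemma Inv1_const {F : ℍ → ℂ} (hF : Hol F) (hi : Inv1 F) (hb : F =O[atImInfty] (1 : ℍ → ℝ)) :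
    ∃ c, ∀ τ, F τ = c := by
  have hs : ∀ γ : SL(2, ℤ), F ∣[(0 : ℤ)] γ = F := by
    intro γ
    ext τ
    rw [ModularForm.SL_slash_apply, hi γ τ]
    simp
  let f : ModularForm 𝒮ℒ 0 :=
    { toFun := F
      slash_action_eq' := by
        rintro _ ⟨γ, rfl⟩
        exact hs γ
      holo' := (Hol_iff F).1 hF
      bdd_at_cusps' := by
        intro c hc
        rw [OnePoint.isBoundedAt_iff_forall_SL2Z hc]
        intro γ _
        rw [hs]
        exact hb }
  obtain ⟨c, hc⟩ := ModularFormClass.levelOne_weight_zero_const f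
  exact ⟨c, fun τ => congrFun hc τ⟩

lemma Hol_poly (p : Polynomial ℂ) {F : ℍ → ℂ} (hF : Hol F) : Hol (fun τ => p.eval (F τ)) := by
  induction p using Polynomial.induction_on' with
  | add p q hp hq => simpa using! hp.add hq
  | monomial n a =>
    simp only [Polynomial.eval_monomial]
    have : ∀ n : ℕ, Hol (fun τ => F τ ^ n) := by
      intro n
      induction n with
      | zero => simpa using! Hol.const 1
      | succ n ih => simp only [pow_succ]; exact ih.mul hF
    exact (Hol.const a).mul (this n)

lemma Hol_poly_j (k : ℕ) : ∀ (F : ℍ → ℂ), Hol F → Inv1 F →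
    (F =O[atImInfty] fun τ => qpow 1 (-k) τ) → ∃ p : Polynomial ℂ, ∀ τ, F τ = p.eval (jinv τ) := by
  induction k with
  | zero =>
    intro F hF hi hb
    have : (fun τ => qpow 1 (-(0 : ℕ)) τ) = fun _ => (1 : ℂ) := by
      funext τ; simpa using qpow_zero 1 τ
    rw [this] at hb
    obtain ⟨c, hc⟩ := Inv1_const hF hi (hb.trans (isBigO_of_le _ (by simp)))
    exact ⟨Polynomial.C c, fun τ => by simp [hc]⟩
  | succ k ih =>
    intro F hF hi hb
    have hq : ∀ τ, qpow 1 (-(k + 1 : ℕ)) τ * qpow 1 (k + 1) τ = 1 := by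
      intro τ; rw [← qpow_add]; simpa using qpow_zero 1 τ
    have hb1 : (fun τ => F τ * qpow 1 (k + 1) τ) =O[atImInfty] (1 : ℍ → ℝ) := by
      have := hb.mul (isBigO_refl (fun τ => qpow 1 (k + 1) τ) atImInfty)
      simp only [hq] at this
      exact this.trans (isBigO_of_le _ (by simp))
    obtain ⟨ψ, hψ, e⟩ := cusp_exp (F := fun τ => F τ * qpow 1 (k + 1) τ) (hF.mul (qpow_Hol _))
      (fun τ => by simp only [qpow_per, hi.per]) hb1
    have ht : Tendsto (qpow 1 1) atImInfty (𝓝 0) :=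
      (qpow_tendsto 1 one_pos).mono_right nhdsWithin_le_nhds
    have l1 : Tendsto (fun τ => F τ * qpow 1 (k + 1) τ) atImInfty (𝓝 (ψ 0)) := by
      rw [funext e]
      exact hψ.continuousAt.tendsto.comp ht
    have l2 : Tendsto (fun τ => jinv τ ^ (k + 1) * qpow 1 (k + 1) τ) atImInfty (𝓝 1) := by
      have := jinv_tendsto.pow (k + 1)
      rw [one_pow] at this
      refine this.congr fun τ => ?_
      rw [mul_pow, ← qpow_nat]
      push_cast
      rfl
    set G : ℍ → ℂ := fun τ => F τ + -(ψ 0 * jinv τ ^ (k + 1)) with hG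
    have hGHol : Hol G := by
      have h1 := Hol_poly (Polynomial.C (ψ 0) * Polynomial.X ^ (k + 1)) jinv_Hol
      simp only [Polynomial.eval_mul, Polynomial.eval_C, Polynomial.eval_pow, Polynomial.eval_X] at h1
      exact hF.add h1.neg
    have hGi : Inv1 G := fun γ τ => by simp only [hG, hi γ τ, jinv_Inv γ τ]
    have l3 : Tendsto (fun τ => G τ * qpow 1 (k + 1) τ) atImInfty (𝓝 0) := by
      have := l1.sub (l2.const_mul (ψ 0))
      rw [mul_one, sub_self] at this
      refine this.congr fun τ => ?_
      simp only [hG]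
      ring
    obtain ⟨χ, hχ, e'⟩ := cusp_exp (F := fun τ => G τ * qpow 1 (k + 1) τ) (hGHol.mul (qpow_Hol _))
      (fun τ => by simp only [qpow_per, hGi.per]) (l3.isBigO_one ℝ)
    have hχ0 : χ 0 = 0 := by
      refine tendsto_nhds_unique ?_ l3
      rw [funext e']
      exact hχ.continuousAt.tendsto.comp ht
    have hO : (fun τ => G τ * qpow 1 (k + 1) τ) =O[atImInfty] fun τ => qpow 1 1 τ := by
      have := hχ.differentiableAt.isBigO_sub
      simp only [hχ0, sub_zero] at this
      rw [funext e']
      exact this.comp_tendsto ht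
    have hO2 : G =O[atImInfty] fun τ => qpow 1 (-k) τ := by
      have := hO.mul (isBigO_refl (fun τ => qpow 1 (-(k + 1 : ℕ)) τ) atImInfty)
      refine (this.congr_left fun τ => ?_).congr_right fun τ => ?_
      · rw [mul_assoc, mul_comm (qpow 1 (k + 1) τ), hq, mul_one]
      · rw [← qpow_add]; congr 1; push_cast; ring
    obtain ⟨p, hp⟩ := ih G hGHol hGi hO2
    refine ⟨p + Polynomial.C (ψ 0) * Polynomial.X ^ (k + 1), fun τ => ?_⟩
    simp only [Polynomial.eval_add, Polynomial.eval_mul, Polynomial.eval_C, Polynomial.eval_pow,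
      Polynomial.eval_X, ← hp, hG]
    ring


/-! ### Meromorphic functions on the upper half-plane -/

/-- Meromorphic on the upper half-plane. -/
def Mer (F : ℍ → ℂ) : Prop := MeromorphicOn (extH F) {z | 0 < z.im}

lemma isOpen_H : IsOpen {z : ℂ | 0 < z.im} := isOpen_lt continuous_const Complex.continuous_im

lemma Hol.analyticAt {F : ℍ → ℂ} (h : Hol F) (τ : ℍ) : AnalyticAt ℂ (extH F) τ :=
  DifferentiableOn.analyticAt h (isOpen_H.mem_nhds τ.im_pos)

lemma Hol.mer {F : ℍ → ℂ} (h : Hol F) : Mer F := fun z hz =>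
  (h.analyticAt ⟨z, hz⟩).meromorphicAt

lemma extH_mul (F G : ℍ → ℂ) : extH (F * G) = extH F * extH G := by
  funext z
  by_cases hz : 0 < z.im <;> simp [extH, hz]

lemma extH_add (F G : ℍ → ℂ) : extH (F + G) = extH F + extH G := by
  funext z
  by_cases hz : 0 < z.im <;> simp [extH, hz]

lemma extH_div (F G : ℍ → ℂ) : extH (F / G) = extH F / extH G := by
  funext z
  by_cases hz : 0 < z.im <;> simp [extH, hz]

lemma extH_neg (F : ℍ → ℂ) : extH (-F) = -extH F := by
  funext z
  by_cases hz : 0 < z.im <;> simp [extH, hz]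

lemma Mer.mul {F G : ℍ → ℂ} (h : Mer F) (h' : Mer G) : Mer (F * G) := by
  unfold Mer; rw [extH_mul]; exact MeromorphicOn.mul h h'

lemma Mer.add {F G : ℍ → ℂ} (h : Mer F) (h' : Mer G) : Mer (F + G) := by
  unfold Mer; rw [extH_add]; exact MeromorphicOn.add h h'

lemma Mer.div {F G : ℍ → ℂ} (h : Mer F) (h' : Mer G) : Mer (F / G) := by
  unfold Mer; rw [extH_div]; exact MeromorphicOn.div h h'

lemma Mer.neg {F : ℍ → ℂ} (h : Mer F) : Mer (-F) := by
  unfold Mer; rw [extH_neg]; exact MeromorphicOn.neg h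

/-- The ring of meromorphic functions. -/
def MerR : Subring (ℍ → ℂ) where
  carrier := {F | Mer F}
  mul_mem' h h' := Mer.mul h h'
  one_mem' := (Hol.const 1).mer
  add_mem' h h' := Mer.add h h'
  zero_mem' := (Hol.const 0).mer
  neg_mem' h := Mer.neg h

lemma smul_continuous (γ : SL(2, ℤ)) : Continuous (fun τ : ℍ => γ • τ) := by
  have : (fun τ : ℍ => γ • τ) = fun τ : ℍ => ((γ : GL (Fin 2) ℝ) • τ) := by
    funext τ; rfl
  rw [this]
  exact continuous_const_smul _

lemma smul_hol (γ : SL(2, ℤ)) : Hol (fun τ => ((γ • τ : ℍ) : ℂ)) := by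
  rw [Hol_iff]
  have : (fun τ : ℍ => ((γ • τ : ℍ) : ℂ)) = fun τ : ℍ => (((γ : GL (Fin 2) ℝ) • τ : ℍ) : ℂ) := by
    funext τ; rfl
  rw [this]
  exact mdifferentiable_coe.comp (mdifferentiable_smul (by simp))

lemma Mer.comp {F : ℍ → ℂ} (h : Mer F) (γ : SL(2, ℤ)) : Mer (fun τ => F (γ • τ)) := by
  intro z hz
  have h1 := (smul_hol γ).analyticAt ⟨z, hz⟩
  have h2 : MeromorphicAt (extH F) (extH (fun τ => ((γ • τ : ℍ) : ℂ)) z) := by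
    have := extH_coe (fun τ => ((γ • τ : ℍ) : ℂ)) ⟨z, hz⟩
    simp only at this
    rw [this]
    exact h _ (γ • (⟨z, hz⟩ : ℍ)).im_pos
  refine (h2.comp_analyticAt h1).congr ?_
  refine (isOpen_H.eventually_mem hz).filter_mono nhdsWithin_le_nhds |>.mono fun w hw => ?_
  have e1 := extH_coe (fun τ => ((γ • τ : ℍ) : ℂ)) ⟨w, hw⟩
  have e2 := extH_coe (fun τ => F (γ • τ)) ⟨w, hw⟩
  simp only at e1 e2
  rw [Function.comp, e1, extH_coe, e2]

lemma map_coe_punctured (τ : ℍ) : map ((↑) : ℍ → ℂ) (𝓝[≠] τ) = 𝓝[≠] (τ : ℂ) := by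
  rw [isOpenEmbedding_coe.isEmbedding.map_nhdsWithin_eq, 
    ← nhdsWithin_inter_of_mem (s := Set.range ((↑) : ℍ → ℂ)) (t := {(τ : ℂ)}ᶜ)]
  · congr 1
    ext z
    constructor
    · rintro ⟨σ, h, rfl⟩
      exact ⟨⟨σ, rfl⟩, fun e => h (UpperHalfPlane.ext e)⟩
    · rintro ⟨⟨σ, rfl⟩, h⟩
      exact ⟨σ, fun e => h (by rw [show σ = τ from e]; rfl), rfl⟩
  · exact mem_nhdsWithin_of_mem_nhds (isOpenEmbedding_coe.isOpen_range.mem_nhds ⟨τ, rfl⟩)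

instance punct_neBot (τ : ℍ) : NeBot (𝓝[≠] τ) := by
  have : NeBot (map ((↑) : ℍ → ℂ) (𝓝[≠] τ)) := by rw [map_coe_punctured]; infer_instance
  exact map_neBot_iff _ |>.1 this

lemma extH_comp (F : ℍ → ℂ) : extH F ∘ ((↑) : ℍ → ℂ) = F := funext (extH_coe F)

lemma tendsto_ext {F : ℍ → ℂ} {τ : ℍ} {l : Filter ℂ} :
    Tendsto (extH F) (𝓝[≠] (τ : ℂ)) l ↔ Tendsto F (𝓝[≠] τ) l := by
  rw [← map_coe_punctured, tendsto_map'_iff, extH_comp]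

lemma smul_punctured (γ : SL(2, ℤ)) (τ : ℍ) : Tendsto (fun σ : ℍ => γ • σ) (𝓝[≠] τ) (𝓝[≠] (γ • τ)) := by
  refine tendsto_nhdsWithin_iff.2 ⟨(smul_continuous γ).continuousAt.tendsto.mono_left nhdsWithin_le_nhds, ?_⟩
  filter_upwards [self_mem_nhdsWithin] with σ hσ
  exact fun e => hσ (MulAction.injective γ e)

/-- Bounded in a punctured neighbourhood. -/
def LB (F : ℍ → ℂ) (τ : ℍ) : Prop := F =O[𝓝[≠] τ] (1 : ℍ → ℝ)

lemma Hol.continuousAt {F : ℍ → ℂ} (h : Hol F) (τ : ℍ) : ContinuousAt F τ := by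
  have := (h.analyticAt τ).continuousAt
  have h2 := ContinuousAt.comp (f := ((↑) : ℍ → ℂ)) this UpperHalfPlane.continuous_coe.continuousAt
  rwa [extH_comp] at h2

lemma LB.of_cont {F : ℍ → ℂ} {τ : ℍ} (h : ContinuousAt F τ) : LB F τ :=
  (h.tendsto.isBigO_one ℝ).mono nhdsWithin_le_nhds

lemma cont_of_ext {F : ℍ → ℂ} {τ : ℍ} (h : ContinuousAt (extH F) τ) : ContinuousAt F τ := by
  have h2 := ContinuousAt.comp (f := ((↑) : ℍ → ℂ)) h UpperHalfPlane.continuous_coe.continuousAt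
  rwa [extH_comp] at h2

lemma LB.mul {F G : ℍ → ℂ} {τ : ℍ} (h : LB F τ) (h' : LB G τ) : LB (F * G) τ := by
  have := IsBigO.mul h h'
  exact this.congr (fun _ => rfl) (fun _ => by simp)

lemma LB.smul {F : ℍ → ℂ} (hF : Inv1 F) (γ : SL(2, ℤ)) {τ : ℍ} (h : LB F (γ • τ)) : LB F τ := by
  have := IsBigO.comp_tendsto h (smul_punctured γ τ)
  exact this.congr (fun σ => hF γ σ) (fun σ => rfl)

/-- Removal of singularities. -/
lemma removable {G : ℍ → ℂ} (hG : Mer G) (hb : ∀ τ, LB G τ) :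
    ∃ H : ℍ → ℂ, Hol H ∧ ∀ τ, Tendsto G (𝓝[≠] τ) (𝓝 (H τ)) := by
  have hl : ∀ τ : ℍ, ∃ c, Tendsto G (𝓝[≠] τ) (𝓝 c) := by
    intro τ
    refine ⟨_, tendsto_ext.1 (tendsto_limUnder_of_differentiable_on_punctured_nhds_of_bounded_under
      ((hG τ τ.im_pos).eventually_analyticAt.mono fun z hz => hz.differentiableAt) ?_)⟩
    have h1 : (fun σ : ℍ => G σ - G τ) =O[𝓝[≠] τ] (1 : ℍ → ℝ) :=
      (hb τ).sub (isBigO_const_const (G τ) one_ne_zero _)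
    have h2 := ((isBigO_one_iff ℝ).1 h1)
    rw [← map_coe_punctured]
    unfold IsBoundedUnder
    rw [Filter.map_map]
    have e : (fun z => ‖extH G z - extH G τ‖) ∘ ((↑) : ℍ → ℂ) = fun σ : ℍ => ‖G σ - G τ‖ := by
      funext σ
      simp [extH_coe]
    rw [e]
    exact h2
  choose H hH using hl
  refine ⟨H, fun z hz => ?_, hH⟩
  set τ : ℍ := ⟨z, hz⟩ with hτ
  have hcont : ∀ σ : ℍ, ContinuousAt (extH G) σ → H σ = G σ := by
    intro σ hσ
    exact tendsto_nhds_unique (hH σ) ((cont_of_ext hσ).tendsto.mono_left nhdsWithin_le_nhds)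
  have hev : ∀ᶠ w in 𝓝[≠] (τ : ℂ), AnalyticAt ℂ (extH G) w ∧ 0 < w.im :=
    (hG τ τ.im_pos).eventually_analyticAt.and
      ((isOpen_H.eventually_mem τ.im_pos).filter_mono nhdsWithin_le_nhds)
  have heq : ∀ w, AnalyticAt ℂ (extH G) w ∧ 0 < w.im → extH H w = extH G w := by
    rintro w ⟨h1, h2⟩
    have e1 := extH_coe H ⟨w, h2⟩
    have e2 := extH_coe G ⟨w, h2⟩
    have := hcont ⟨w, h2⟩ h1.continuousAt
    simp only at e1 e2
    rw [e1, e2, this]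
  have key : AnalyticAt ℂ (extH H) τ := by
    refine analyticAt_of_differentiable_on_punctured_nhds_of_continuousAt ?_ ?_
    · filter_upwards [eventually_eventually_nhdsWithin.2 hev, hev, self_mem_nhdsWithin] with w h1 h2 h3
      rw [eventually_nhdsWithin_iff] at h1
      refine h2.1.differentiableAt.congr_of_eventuallyEq ?_
      filter_upwards [h1, isOpen_compl_singleton.mem_nhds h3] with v hv hv'
      exact heq v (hv hv')
    · rw [continuousAt_iff_punctured_nhds, extH_coe]
      refine (tendsto_ext.2 (hH τ)).congr' ?_
      filter_upwards [hev] with w hw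
      exact (heq w hw).symm
  exact key.differentiableAt.differentiableWithinAt

lemma QK.cont {K : Subfield ℂ} {m : ℕ} (hm : 0 < m) {F : ℍ → ℂ} (h : QK K m F) :
    ∃ A : ℝ, ∀ τ : ℍ, A < τ.im → ContinuousAt F τ := by
  obtain ⟨n, φ, h1, h2⟩ := h
  have h3 := ((qpow_tendsto m hm).mono_right nhdsWithin_le_nhds).eventually h1.1.eventually_analyticAt
  obtain ⟨A, hA⟩ := (atImInfty_mem _).1 (h2.and h3)
  refine ⟨A, fun τ hτ => ?_⟩
  have hq : ∀ n, Continuous (qpow m n) := by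
    intro n
    unfold qpow
    have := UpperHalfPlane.continuous_coe
    fun_prop
  have c1 : ContinuousAt (fun τ => qpow m n τ * φ (qpow m 1 τ)) τ :=
    (hq n).continuousAt.mul
      (ContinuousAt.comp (f := qpow m 1) (hA τ hτ.le).2.continuousAt (hq 1).continuousAt)
  refine c1.congr ?_
  filter_upwards [(isOpen_lt continuous_const UpperHalfPlane.continuous_im).mem_nhds hτ] with σ hσ
  exact (hA σ (le_of_lt hσ)).1.symm

lemma local_pole {F : ℍ → ℂ} (hF : Mer F) (τ : ℍ) : ∃ p : Polynomial ℂ, p ≠ 0 ∧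
    ∃ t ∈ 𝓝 τ, ∀ σ ∈ t, LB (fun τ => p.eval (jinv τ) * F τ) σ := by
  obtain ⟨n, hn⟩ := hF τ τ.im_pos
  refine ⟨(Polynomial.X - Polynomial.C (jinv τ)) ^ n, pow_ne_zero _ (Polynomial.X_sub_C_ne_zero _), ?_⟩
  have hp : LB (fun σ => ((Polynomial.X - Polynomial.C (jinv τ)) ^ n).eval (jinv σ) * F σ) τ := by
    have h1 := (jinv_Hol.analyticAt τ).differentiableAt.isBigO_sub.pow n
    have h2 : (fun z : ℂ => (z - τ) ^ n • extH F z) =O[𝓝 (τ : ℂ)] (fun _ => (1 : ℝ)) :=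
      hn.continuousAt.tendsto.isBigO_one ℝ
    have h3 := h1.mul (isBigO_refl (extH F) (𝓝 (τ : ℂ)))
    have h4 := (h3.trans h2).comp_tendsto
      (UpperHalfPlane.continuous_coe.continuousAt (x := τ)).tendsto
    refine (h4.mono nhdsWithin_le_nhds).congr (fun σ => ?_) (fun σ => rfl)
    simp [extH_coe]
  have hev : ∀ᶠ σ in 𝓝[≠] τ, LB (fun σ => ((Polynomial.X - Polynomial.C (jinv τ)) ^ n).eval (jinv σ) * F σ) σ := by
    have := (hF τ τ.im_pos).eventually_analyticAt
    rw [← map_coe_punctured, eventually_map] at this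
    filter_upwards [this] with σ hσ
    exact LB.of_cont (((Hol_poly _ jinv_Hol).continuousAt σ).mul (cont_of_ext hσ.continuousAt))
  rw [eventually_nhdsWithin_iff] at hev
  refine ⟨_, hev, fun σ hσ => ?_⟩
  by_cases e : σ = τ
  · rw [e]; exact hp
  · exact hσ e

lemma poly_mem (R : Subring (ℍ → ℂ)) (hc : ∀ c : ℂ, (fun _ => c) ∈ R) {F : ℍ → ℂ} (hF : F ∈ R)
    (p : Polynomial ℂ) : (fun τ => p.eval (F τ)) ∈ R := by
  induction p using Polynomial.induction_on' with
  | add p q hp hq => simpa using! R.add_mem hp hq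
  | monomial n a =>
    simp only [Polynomial.eval_monomial]
    exact R.mul_mem (hc a) (R.pow_mem hF n)

lemma mer_inv_rat {m : ℕ} (hm : 0 < m) {F : ℍ → ℂ} (hF : Mer F) (hi : Inv1 F) (hq : QK ⊤ m F) :
    ∃ p n : Polynomial ℂ, p ≠ 0 ∧ ∀ᶠ τ in atImInfty, p.eval (jinv τ) * F τ = n.eval (jinv τ) := by
  obtain ⟨A, hA⟩ := hq.cont hm
  obtain ⟨p, hp, hb⟩ := (ModularGroup.isCompact_truncatedFundamentalDomain A).induction_on
    (p := fun s => ∃ p : Polynomial ℂ, p ≠ 0 ∧ ∀ τ ∈ s, LB (fun τ => p.eval (jinv τ) * F τ) τ)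
    ⟨1, one_ne_zero, by simp⟩ (fun s t hst ⟨p, h1, h2⟩ => ⟨p, h1, fun τ hτ => h2 τ (hst hτ)⟩)
    (by
      rintro s t ⟨p, h1, h2⟩ ⟨q, h3, h4⟩
      refine ⟨p * q, mul_ne_zero h1 h3, fun τ hτ => ?_⟩
      rcases hτ with hτ | hτ
      · have := (LB.of_cont ((Hol_poly q jinv_Hol).continuousAt τ)).mul (h2 τ hτ)
        refine this.congr_left fun σ => ?_
        simp only [Pi.mul_apply, Polynomial.eval_mul]; ring
      · have := (LB.of_cont ((Hol_poly p jinv_Hol).continuousAt τ)).mul (h4 τ hτ)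
        refine this.congr_left fun σ => ?_
        simp only [Pi.mul_apply, Polynomial.eval_mul]; ring)
    (by
      intro τ _
      obtain ⟨p, h1, t, h2, h3⟩ := local_pole hF τ
      exact ⟨t, mem_nhdsWithin_of_mem_nhds h2, p, h1, h3⟩)
  set G : ℍ → ℂ := fun τ => p.eval (jinv τ) * F τ with hG
  have hGi : Inv1 G := fun γ τ => by simp only [hG, jinv_smul, hi γ τ]
  have hGm : Mer G := (Hol_poly p jinv_Hol).mer.mul hF
  have hGc : ∀ τ : ℍ, A < τ.im → ContinuousAt G τ := fun τ hτ =>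
    ((Hol_poly p jinv_Hol).continuousAt τ).mul (hA τ hτ)
  have hGb : ∀ τ, LB G τ := by
    intro τ
    obtain ⟨γ, hγ⟩ := ModularGroup.exists_smul_mem_fd τ
    refine LB.smul hGi γ ?_
    by_cases h : A < (γ • τ).im
    · exact LB.of_cont (hGc _ h)
    · exact hb _ ⟨hγ, not_lt.1 h⟩
  obtain ⟨H, hH, hl⟩ := removable hGm hGb
  have hHi : Inv1 H := by
    intro γ τ
    refine tendsto_nhds_unique ?_ (hl τ)
    refine ((hl (γ • τ)).comp (smul_punctured γ τ)).congr fun σ => hGi γ σ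
  have hHG : ∀ τ : ℍ, A < τ.im → H τ = G τ := fun τ hτ =>
    tendsto_nhds_unique (hl τ) ((hGc τ hτ).tendsto.mono_left nhdsWithin_le_nhds)
  have hev : ∀ᶠ τ in atImInfty, H τ = G τ :=
    (atImInfty_mem _).2 ⟨A + 1, fun τ hτ => hHG τ (by linarith)⟩
  have hpq : QK ⊤ m (fun τ => p.eval (jinv τ)) :=
    poly_mem (QKr ⊤ m) (fun c => QK.const trivial) ((jinv_QK.level hm).mono le_top) p
  have hGq : QK ⊤ m G := hpq.mul hq
  obtain ⟨k, hk⟩ := (hGq.congr (hev.mono fun τ h => h.symm)).growth hm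
  obtain ⟨n, hn⟩ := Hol_poly_j k H hH hHi hk
  exact ⟨p, n, hp, hev.mono fun τ h => by rw [← hn, h]⟩


/-! ### Lagrange interpolation -/

/-- Evaluation of a two-variable complex polynomial at `(j, f)`. -/
def evalC (m : ℕ) (P : MvPolynomial (Fin 2) ℂ) (τ : ℍ) : ℂ :=
  MvPolynomial.eval ![jinv τ, fricke ((1 : ℚ) / m, 0) τ] P

/-- Composition with the action of `δ`, as a ring homomorphism. -/
def compH (δ : SL(2, ℤ)) : (ℍ → ℂ) →+* (ℍ → ℂ) where
  toFun F := fun τ => F (δ • τ)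
  map_one' := rfl
  map_mul' _ _ := rfl
  map_zero' := rfl
  map_add' _ _ := rfl

open Classical in
/-- The interpolation polynomial with nodes `U` and weighted values `v`. -/
def lagP (U : Finset (ℍ → ℂ)) (v : (ℍ → ℂ) → (ℍ → ℂ)) : Polynomial (ℍ → ℂ) :=
  ∑ u ∈ U, Polynomial.C (v u) * ∏ u' ∈ U.erase u, (Polynomial.X - Polynomial.C u')

open Classical in
lemma lagP_eval (U : Finset (ℍ → ℂ)) (v : (ℍ → ℂ) → (ℍ → ℂ)) {f : ℍ → ℂ} (hf : f ∈ U) :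
    (lagP U v).eval f = v f * ∏ u' ∈ U.erase f, (f - u') := by
  unfold lagP
  rw [Polynomial.eval_finset_sum, Finset.sum_eq_single f]
  · simp [Polynomial.eval_prod]
  · intro u hu hne
    simp only [Polynomial.eval_mul, Polynomial.eval_C, Polynomial.eval_prod, Polynomial.eval_sub,
      Polynomial.eval_X]
    rw [Finset.prod_eq_zero (i := f) (Finset.mem_erase.2 ⟨hne.symm, hf⟩) (sub_self f), mul_zero]
  · exact fun h => absurd hf h

open Classical in
lemma lagP_map (U : Finset (ℍ → ℂ)) (v : (ℍ → ℂ) → (ℍ → ℂ)) (δ : SL(2, ℤ))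
    (hU : U.image (compH δ) = U) (hinj : Function.Injective (compH δ))
    (hv : ∀ u ∈ U, compH δ (v u) = v (compH δ u)) :
    (lagP U v).map (compH δ) = lagP U v := by
  have hc := Finset.sum_image (s := U) (g := compH δ)
    (f := fun u => Polynomial.C (v u) * ∏ u' ∈ U.erase u, (Polynomial.X - Polynomial.C u'))
    (fun a _ b _ h => hinj h)
  rw [hU] at hc
  unfold lagP
  rw [Polynomial.map_sum]
  refine Eq.trans ?_ hc.symm
  refine Finset.sum_congr rfl fun u hu => ?_
  rw [Polynomial.map_mul, Polynomial.map_C, hv u hu, Polynomial.map_prod]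
  congr 1
  have e : U.erase (compH δ u) = (U.erase u).image (compH δ) := by
    rw [Finset.image_erase hinj, hU]
  rw [e, Finset.prod_image fun a _ b _ h => hinj h]
  simp

open Classical in
lemma lagP_coeff (R : Subring (ℍ → ℂ)) (U : Finset (ℍ → ℂ)) (v : (ℍ → ℂ) → (ℍ → ℂ))
    (hU : ∀ u ∈ U, u ∈ R) (hv : ∀ u ∈ U, v u ∈ R) (n : ℕ) : (lagP U v).coeff n ∈ R := by
  have hmem : lagP U v ∈ (Polynomial.mapRingHom R.subtype).range := by
    have hC : ∀ a ∈ R, Polynomial.C a ∈ (Polynomial.mapRingHom R.subtype).range := fun a ha =>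
      ⟨Polynomial.C ⟨a, ha⟩, by simp⟩
    refine Subring.sum_mem _ fun u hu => Subring.mul_mem _ (hC _ (hv u hu)) ?_
    refine Subring.prod_mem _ fun u' hu' => Subring.sub_mem _ ⟨Polynomial.X, by simp⟩ (hC _ (hU _ ?_))
    exact Finset.mem_of_mem_erase hu'
  obtain ⟨q, hq⟩ := hmem
  rw [← hq]
  simp

lemma jinv_cobounded : Tendsto jinv atImInfty (Bornology.cobounded ℂ) := by
  have h1 : Tendsto (fun τ => (qpow 1 1 τ)⁻¹) atImInfty (Bornology.cobounded ℂ) :=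
    tendsto_inv₀_nhdsNE_zero.comp (qpow_tendsto 1 one_pos)
  have h2 : Tendsto (fun τ => ‖jinv τ * qpow 1 1 τ‖) atImInfty (𝓝 1) := by
    simpa using jinv_tendsto.norm
  rw [← tendsto_norm_atTop_iff_cobounded] at h1 ⊢
  refine (h2.pos_mul_atTop one_pos h1).congr fun τ => ?_
  rw [← norm_mul, mul_assoc, mul_inv_cancel₀ (qpow_ne_zero 1 1 τ), mul_one]

lemma poly_j_ne {p : Polynomial ℂ} (hp : p ≠ 0) : ∀ᶠ τ in atImInfty, p.eval (jinv τ) ≠ 0 := by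
  have : ((p.roots.toFinset : Set ℂ))ᶜ ∈ Bornology.cobounded ℂ := by
    rw [← Bornology.isBounded_def]
    exact (Finset.finite_toSet _).isBounded
  filter_upwards [jinv_cobounded this] with τ hτ h0
  apply hτ
  simp [hp, h0]

/-- A one-variable polynomial in `j`. -/
def inJ (p : Polynomial ℂ) : MvPolynomial (Fin 2) ℂ := Polynomial.aeval (MvPolynomial.X 0) p

lemma inJ_eval (m : ℕ) (p : Polynomial ℂ) (τ : ℍ) : evalC m (inJ p) τ = p.eval (jinv τ) := by
  unfold evalC inJ
  rw [← MvPolynomial.coe_aeval_eq_eval]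
  change (MvPolynomial.aeval _ : MvPolynomial (Fin 2) ℂ →ₐ[ℂ] ℂ) _ = _
  rw [← Polynomial.aeval_algHom_apply]
  simp [Polynomial.aeval_def, Polynomial.eval₂_eq_eval_map]

lemma evalC_mul (m : ℕ) (P Q : MvPolynomial (Fin 2) ℂ) (τ : ℍ) :
    evalC m (P * Q) τ = evalC m P τ * evalC m Q τ := by simp [evalC]

lemma evalC_add (m : ℕ) (P Q : MvPolynomial (Fin 2) ℂ) (τ : ℍ) :
    evalC m (P + Q) τ = evalC m P τ + evalC m Q τ := by simp [evalC]

lemma sum_rat {m : ℕ} (hm : 0 < m) (a : ℕ → ℍ → ℂ) (h1 : ∀ k, Mer (a k)) (h2 : ∀ k, Inv1 (a k))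
    (h3 : ∀ k, QK ⊤ m (a k)) (N : ℕ) : ∃ p : Polynomial ℂ, p ≠ 0 ∧ ∃ P : MvPolynomial (Fin 2) ℂ,
    ∀ᶠ τ in atImInfty, p.eval (jinv τ) *
      (∑ k ∈ Finset.range N, a k τ * fricke ((1 : ℚ) / m, 0) τ ^ k) = evalC m P τ := by
  induction N with
  | zero => exact ⟨1, one_ne_zero, 0, by simp [evalC]⟩
  | succ N ih =>
    obtain ⟨p, hp, P, hP⟩ := ih
    obtain ⟨q, n, hq, hn⟩ := mer_inv_rat hm (h1 N) (h2 N) (h3 N)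
    refine ⟨q * p, mul_ne_zero hq hp, inJ q * P + inJ p * inJ n * MvPolynomial.X 1 ^ N, ?_⟩
    filter_upwards [hP, hn] with τ e1 e2
    have e3 : evalC m (MvPolynomial.X 1 ^ N) τ = fricke ((1 : ℚ) / m, 0) τ ^ N := by simp [evalC]
    rw [Finset.sum_range_succ, evalC_add, evalC_mul, evalC_mul, evalC_mul, inJ_eval, inJ_eval,
      inJ_eval, ← e1, ← e2, e3, Polynomial.eval_mul]
    ring

open Classical in
lemma complex_rat {m : ℕ} (hm : 1 < m) {h : ℍ → ℂ} (hM : Mer h)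
    (hh : ∀ γ : SL(2, ℤ), GammaUpper m γ → ∀ τ : ℍ, h (γ • τ) = h τ)
    (hq : ∀ γ : SL(2, ℤ), QK ⊤ m (fun τ => h (γ • τ))) :
    ∃ P Q : MvPolynomial (Fin 2) ℂ, (∀ᶠ τ in atImInfty, evalC m Q τ ≠ 0) ∧
      ∀ᶠ τ in atImInfty, evalC m Q τ * h τ = evalC m P τ := by
  have hm0 : 0 < m := by omega
  set f := fricke ((1 : ℚ) / m, 0) with hf
  have key : ∀ {g : ℍ → ℂ}, (∀ γ : SL(2, ℤ), GammaUpper m γ → ∀ τ : ℍ, g (γ • τ) = g τ) →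
      ∀ γ δ : SL(2, ℤ), compH γ f = compH δ f → compH γ g = compH δ g := by
    intro g hg γ δ e
    have e1 : (fun τ => f ((γ * δ⁻¹) • τ)) = f := by
      funext τ
      have := congrFun e (δ⁻¹ • τ)
      simp only [compH, RingHom.coe_mk, MonoidHom.coe_mk, OneHom.coe_mk, smul_inv_smul] at this
      rw [mul_smul, this]
    funext τ
    have := stab_inv hm hg (γ * δ⁻¹) (by rw [← hf, e1]) (δ • τ)
    rwa [mul_smul, inv_smul_smul] at this
  have hfin : (Set.range fun γ : SL(2, ℤ) => compH γ f).Finite := by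
    have : NeZero m := ⟨by omega⟩
    let r : SL(2, ℤ) → (Fin 2 → Fin 2 → ZMod m) := fun γ i j => ((γ i j : ℤ) : ZMod m)
    have hr : ∀ γ δ, r γ = r δ → compH γ f = compH δ f := by
      intro γ δ e
      funext τ
      exact f_cong hm γ δ (fun i j => congrFun (congrFun e i) j) τ
    let s : (Fin 2 → Fin 2 → ZMod m) → (ℍ → ℂ) := fun x =>
      if hx : ∃ γ, r γ = x then compH hx.choose f else 0
    refine (Set.finite_range s).subset ?_
    rintro _ ⟨γ, rfl⟩
    have hx : ∃ δ, r δ = r γ := ⟨γ, rfl⟩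
    refine ⟨r γ, ?_⟩
    simp only [s, dif_pos hx]
    exact hr _ _ hx.choose_spec
  set U := hfin.toFinset with hU
  have memU : ∀ {u}, u ∈ U ↔ ∃ γ, compH γ f = u := by intro u; simp [hU]
  have comp_comp : ∀ (γ δ : SL(2, ℤ)) (g : ℍ → ℂ), compH δ (compH γ g) = compH (γ * δ) g := by
    intro γ δ g
    funext τ
    simp only [compH, RingHom.coe_mk, MonoidHom.coe_mk, OneHom.coe_mk, mul_smul]
  have comp_one : ∀ g : ℍ → ℂ, compH 1 g = g := by
    intro g
    funext τ
    simp only [compH, RingHom.coe_mk, MonoidHom.coe_mk, OneHom.coe_mk, one_smul]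
  have hinj : ∀ δ, Function.Injective (compH δ) := by
    intro δ a b e
    have := congrArg (compH δ⁻¹) e
    simpa only [comp_comp, mul_inv_cancel, comp_one] using this
  have hUim : ∀ δ, U.image (compH δ) = U := by
    intro δ
    refine Finset.eq_of_subset_of_card_le ?_ (Finset.card_image_of_injective _ (hinj δ)).ge
    intro u hu
    obtain ⟨w, hw, rfl⟩ := Finset.mem_image.1 hu
    obtain ⟨γ, rfl⟩ := memU.1 hw
    exact memU.2 ⟨γ * δ, (comp_comp γ δ f).symm⟩
  have hfU : f ∈ U := memU.2 ⟨1, comp_one f⟩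
  let v : (ℍ → ℂ) → (ℍ → ℂ) := fun u => if hu : ∃ γ, compH γ f = u then compH hu.choose h else 0
  have hv : ∀ γ, v (compH γ f) = compH γ h := by
    intro γ
    have hu : ∃ δ, compH δ f = compH γ f := ⟨γ, rfl⟩
    simp only [v, dif_pos hu]
    exact key hh _ _ hu.choose_spec
  -- the ring of admissible functions
  let R : Subring (ℍ → ℂ) := MerR ⊓ QKr ⊤ m
  have hUR : ∀ u ∈ U, u ∈ R := by
    intro u hu
    obtain ⟨γ, rfl⟩ := memU.1 hu
    exact ⟨(f_Hol hm γ).mer, f_QK' hm γ⟩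
  have main : ∀ w : (ℍ → ℂ) → (ℍ → ℂ), (∀ γ, w (compH γ f) ∈ R) →
      (∀ γ δ, compH δ (w (compH γ f)) = w (compH (γ * δ) f)) →
      ∃ p : Polynomial ℂ, p ≠ 0 ∧ ∃ P : MvPolynomial (Fin 2) ℂ,
        ∀ᶠ τ in atImInfty, p.eval (jinv τ) * (w f τ * (∏ u' ∈ U.erase f, (f - u')) τ) = evalC m P τ := by
    intro w hwR hwc
    have hco := lagP_coeff R U w hUR (fun u hu => by
      obtain ⟨γ, rfl⟩ := memU.1 hu
      exact hwR γ)
    have hmap : ∀ δ, (lagP U w).map (compH δ) = lagP U w := fun δ =>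
      lagP_map U w δ (hUim δ) (hinj δ) (fun u hu => by
        obtain ⟨γ, rfl⟩ := memU.1 hu
        rw [hwc, comp_comp])
    obtain ⟨p, hp, P, hP⟩ := sum_rat hm0 (fun k => (lagP U w).coeff k) (fun k => (hco k).1)
      (fun k δ τ => by
        have := congrArg (fun q : Polynomial (ℍ → ℂ) => Polynomial.coeff q k τ) (hmap δ)
        simp only [Polynomial.coeff_map] at this
        exact this) (fun k => (hco k).2) ((lagP U w).natDegree + 1)
    refine ⟨p, hp, P, hP.mono fun τ e => ?_⟩
    rw [← e]
    have e2 := congrFun (lagP_eval U w hfU) τ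
    rw [Polynomial.eval_eq_sum_range] at e2
    rw [Pi.mul_apply] at e2
    rw [← e2, Finset.sum_apply]
    rfl
  obtain ⟨p1, hp1, P1, e1⟩ := main v (fun γ => by rw [hv]; exact ⟨hM.comp γ, hq γ⟩)
    (fun γ δ => by rw [hv, hv, comp_comp])
  obtain ⟨p2, hp2, P2, e2⟩ := main (fun _ => 1) (fun _ => R.one_mem) (fun _ _ => rfl)
  have hvf : v f = h := by
    have := hv 1
    rwa [comp_one, comp_one] at this
  have hD : ∀ᶠ τ in atImInfty, (∏ u' ∈ U.erase f, (f - u')) τ ≠ 0 := by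
    have : ∀ u' ∈ U.erase f, ∀ᶠ τ in atImInfty, f τ - u' τ ≠ 0 := by
      intro u' hu'
      obtain ⟨hne, hu⟩ := Finset.mem_erase.1 hu'
      have hQ : f - u' ∈ QKr ⊤ m := Subring.sub_mem _ (hUR f hfU).2 (hUR u' hu).2
      rcases QK.zero_or_ne hm0 hQ with h0 | h0
      · exfalso
        obtain ⟨γ, rfl⟩ := memU.1 hu
        apply hne
        funext τ
        refine stab_inv hm (f_inv hm) γ ?_ τ
        filter_upwards [h0] with σ hσ
        exact (sub_eq_zero.1 hσ).symm
      · exact h0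
    filter_upwards [(Filter.eventually_all_finset _).2 this] with τ hτ
    rw [Finset.prod_apply]
    exact Finset.prod_ne_zero_iff.2 hτ
  refine ⟨inJ p2 * P1, inJ p1 * P2, ?_, ?_⟩
  · filter_upwards [e2, hD, poly_j_ne hp1, poly_j_ne hp2] with τ a b c d
    rw [evalC_mul, inJ_eval, ← a]
    simp only [Pi.one_apply, one_mul]
    exact mul_ne_zero c (mul_ne_zero d b)
  · filter_upwards [e1, e2] with τ a b
    rw [evalC_mul, evalC_mul, inJ_eval, inJ_eval, ← a, ← b, hvf]
    simp only [Pi.one_apply, one_mul]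
    ring


/-! ### Descent of the coefficients to `ℚ` -/

lemma analytic_zero_of_deriv {Ψ : ℂ → ℂ} (h : AnalyticAt ℂ Ψ 0) (h0 : ∀ n, iteratedDeriv n Ψ 0 = 0) :
    ∀ᶠ z in 𝓝 0, Ψ z = 0 := by
  rw [← analyticOrderAt_eq_top, ENat.eq_top_iff_forall_ge]
  intro n
  exact (natCast_le_analyticOrderAt_iff_iteratedDeriv_eq_zero h).2 fun i _ => h0 i

lemma iter_sum {ι : Type*} (s : Finset ι) (c : ι → ℂ) (ψ : ι → ℂ → ℂ) (h : ∀ i, AnalyticAt ℂ (ψ i) 0)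
    (n : ℕ) : iteratedDeriv n (fun z => ∑ i ∈ s, c i * ψ i z) 0 =
      ∑ i ∈ s, c i * iteratedDeriv n (ψ i) 0 := by
  rw [iteratedDeriv_fun_sum fun i _ => contDiffAt_const.mul (h i).contDiffAt]
  refine Finset.sum_congr rfl fun i _ => ?_
  rw [iteratedDeriv_const_mul_field]

lemma descent_zero {ι : Type*} {m : ℕ} (hm : 0 < m) (s : Finset ι) (c : ι → ℂ) (G : ι → ℍ → ℂ)
    (hG : ∀ i, QK KQ m (G i)) (φ : ℂ →ₗ[ℚ] ℚ)
    (h : ∀ᶠ τ in atImInfty, ∑ i ∈ s, c i * G i τ = 0) :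
    ∀ᶠ τ in atImInfty, ∑ i ∈ s, ((φ (c i) : ℚ) : ℂ) * G i τ = 0 := by
  classical
  choose n0 hn0 using fun i => (hG i).shift
  obtain ⟨M, hM⟩ := (s.image fun i => -n0 i).exists_le
  obtain ⟨N, hN⟩ : ∃ N : ℤ, ∀ i ∈ s, N ≤ n0 i :=
    ⟨-M, fun i hi => neg_le.1 (hM _ (Finset.mem_image_of_mem _ hi))⟩
  have : ∀ i, ∃ ψ, KAn KQ ψ ∧ (i ∈ s → ∀ᶠ τ in atImInfty, G i τ = qpow m N τ * ψ (qpow m 1 τ)) := by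
    intro i
    by_cases hi : i ∈ s
    · obtain ⟨ψ, h1, h2⟩ := hn0 i N (hN i hi)
      exact ⟨ψ, h1, fun _ => h2⟩
    · exact ⟨fun _ => 0, KAn.const KQ.zero_mem, fun h => absurd h hi⟩
  choose ψ hψ hψe using this
  have hall := (Filter.eventually_all_finset s).2 hψe
  have hA : ∀ d : ι → ℂ, AnalyticAt ℂ (fun z => ∑ i ∈ s, d i * ψ i z) 0 := fun d =>
    Finset.analyticAt_fun_sum _ fun i _ => analyticAt_const.mul (hψ i).1
  have hsum : ∀ d : ι → ℂ, ∀ᶠ τ in atImInfty, ∑ i ∈ s, d i * G i τ =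
      qpow m N τ * ∑ i ∈ s, d i * ψ i (qpow m 1 τ) := by
    intro d
    filter_upwards [hall] with τ hτ
    rw [Finset.mul_sum]
    refine Finset.sum_congr rfl fun i hi => ?_
    rw [hτ i hi]
    ring
  have hz : ∀ᶠ z in 𝓝 0, ∑ i ∈ s, c i * ψ i z = 0 := by
    rcases (hA c).eventually_eq_zero_or_eventually_ne_zero with h0 | h0
    · exact h0
    · exfalso
      obtain ⟨τ, a, b, d⟩ := (((qpow_tendsto m hm).eventually h0).and (h.and (hsum c))).exists
      rw [d] at b
      exact (mul_ne_zero (qpow_ne_zero m N τ) a) b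
  choose r hr using fun i n => mem_KQ ((hψ i).2 n)
  have hd : ∀ n, ∑ i ∈ s, c i * (r i n : ℂ) = 0 := by
    intro n
    have e := iter_sum s c ψ (fun i => (hψ i).1) n
    rw [Filter.EventuallyEq.iteratedDeriv_eq n (show (fun z => ∑ i ∈ s, c i * ψ i z) =ᶠ[𝓝 0] fun _ => 0 from hz)]
      at e
    simp only [hr]
    rw [← e]
    simp [iteratedDeriv_const]
  have hd2 : ∀ n, ∑ i ∈ s, ((φ (c i) : ℚ) : ℂ) * (r i n : ℂ) = 0 := by
    intro n
    have e := congrArg φ (hd n)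
    rw [map_zero, map_sum] at e
    have : ∀ i, φ (c i * (r i n : ℂ)) = φ (c i) * r i n := by
      intro i
      have e1 : c i * (r i n : ℂ) = r i n • c i := by
        rw [Rat.smul_def, mul_comm]
      rw [e1, map_smul, smul_eq_mul, mul_comm]
    simp only [this] at e
    exact_mod_cast e
  have hz2 := analytic_zero_of_deriv (hA fun i => ((φ (c i) : ℚ) : ℂ)) (fun n => by
    rw [iter_sum s _ ψ (fun i => (hψ i).1) n]
    simp only [← hr]
    exact hd2 n)
  filter_upwards [hsum fun i => ((φ (c i) : ℚ) : ℂ),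
    ((qpow_tendsto m hm).mono_right nhdsWithin_le_nhds).eventually hz2] with τ a b
  rw [a, b, mul_zero]

lemma descent_ne {ι : Type*} (s : Finset ι) (c : ι → ℂ) (G : ι → ℍ → ℂ)
    (h : ¬ ∀ᶠ τ in atImInfty, ∑ i ∈ s, c i * G i τ = 0) :
    ∃ φ : ℂ →ₗ[ℚ] ℚ, ¬ ∀ᶠ τ in atImInfty, ∑ i ∈ s, ((φ (c i) : ℚ) : ℂ) * G i τ = 0 := by
  classical
  by_contra! hc
  apply h
  let b := Module.Basis.ofVectorSpace ℚ ℂ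
  let T := s.biUnion fun i => (b.repr (c i)).support
  have hT : ∀ i ∈ s, c i = ∑ k ∈ T, ((b.coord k (c i) : ℚ) : ℂ) * b k := by
    intro i hi
    conv_lhs => rw [← b.linearCombination_repr (c i)]
    rw [Finsupp.linearCombination_apply, Finsupp.sum_of_support_subset (s := T)]
    · refine Finset.sum_congr rfl fun k _ => ?_
      rw [Rat.smul_def]
      rfl
    · exact Finset.subset_biUnion_of_mem (fun i => (b.repr (c i)).support) hi
    · simp
  have hall : ∀ᶠ τ in atImInfty, ∀ k ∈ T, ∑ i ∈ s, ((b.coord k (c i) : ℚ) : ℂ) * G i τ = 0 :=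
    (Filter.eventually_all_finset T).2 fun k _ => hc (b.coord k)
  filter_upwards [hall] with τ hτ
  calc ∑ i ∈ s, c i * G i τ = ∑ i ∈ s, ∑ k ∈ T, b k * (((b.coord k (c i) : ℚ) : ℂ) * G i τ) := by
        refine Finset.sum_congr rfl fun i hi => ?_
        conv_lhs => rw [hT i hi]
        rw [Finset.sum_mul]
        refine Finset.sum_congr rfl fun k _ => ?_
        ring
    _ = ∑ k ∈ T, b k * ∑ i ∈ s, ((b.coord k (c i) : ℚ) : ℂ) * G i τ := by
        rw [Finset.sum_comm]
        simp only [Finset.mul_sum]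
    _ = 0 := Finset.sum_eq_zero fun k hk => by rw [hτ k hk, mul_zero]

/-- The monomials in `(j, f)`. -/
def monJF (m : ℕ) (s : Fin 2 →₀ ℕ) (τ : ℍ) : ℂ := jinv τ ^ s 0 * fricke ((1 : ℚ) / m, 0) τ ^ s 1

lemma evalC_eq (m : ℕ) (P : MvPolynomial (Fin 2) ℂ) (τ : ℍ) :
    evalC m P τ = ∑ s ∈ P.support, P.coeff s * monJF m s τ := by
  simp [evalC, MvPolynomial.eval_eq', monJF, Fin.prod_univ_two]

/-- Apply a linear functional to the coefficients. -/
def descP (φ : ℂ →ₗ[ℚ] ℚ) (P : MvPolynomial (Fin 2) ℂ) : MvPolynomial (Fin 2) ℚ :=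
  ∑ s ∈ P.support, MvPolynomial.monomial s (φ (P.coeff s))

lemma evalJF_descP (m : ℕ) (φ : ℂ →ₗ[ℚ] ℚ) (P : MvPolynomial (Fin 2) ℂ) (τ : ℍ) :
    evalJF m (descP φ P) τ = ∑ s ∈ P.support, ((φ (P.coeff s) : ℚ) : ℂ) * monJF m s τ := by
  unfold evalJF descP
  rw [map_sum]
  refine Finset.sum_congr rfl fun s _ => ?_
  rw [MvPolynomial.aeval_monomial, Finsupp.prod_fintype _ _ (by simp)]
  simp [Fin.prod_univ_two, monJF]

lemma monJF_QK {m : ℕ} (hm : 1 < m) (s : Fin 2 →₀ ℕ) : QK KQ m (monJF m s) :=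
  (QKr KQ m).mul_mem ((QKr KQ m).pow_mem (jinv_QK.level (by omega)) _)
    ((QKr KQ m).pow_mem (f_QK hm) _)

lemma rat_descent {m : ℕ} (hm : 1 < m) {h : ℍ → ℂ} (hq : QK KQ m h)
    {P Q : MvPolynomial (Fin 2) ℂ} (hQ : ∀ᶠ τ in atImInfty, evalC m Q τ ≠ 0)
    (hP : ∀ᶠ τ in atImInfty, evalC m Q τ * h τ = evalC m P τ) :
    ∃ P' Q' : MvPolynomial (Fin 2) ℚ, (∃ τ, evalJF m Q' τ ≠ 0) ∧
      ∀ᶠ τ in atImInfty, evalJF m Q' τ * h τ = evalJF m P' τ := by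
  simp only [evalC_eq] at hQ hP
  obtain ⟨φ, hφ⟩ := descent_ne Q.support Q.coeff (monJF m) (fun h0 => by
    obtain ⟨τ, a, b⟩ := (hQ.and h0).exists
    exact a b)
  refine ⟨descP φ P, descP φ Q, ?_, ?_⟩
  · by_contra! hc
    apply hφ
    filter_upwards with τ
    rw [← evalJF_descP, hc]
  · have := descent_zero (m := m) (by omega) (Q.support.disjSum P.support)
      (Sum.elim Q.coeff fun s => -P.coeff s)
      (Sum.elim (fun s => monJF m s * h) (monJF m))
      (by
        rintro (s | s)
        · exact (monJF_QK hm s).mul hq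
        · exact monJF_QK hm s) φ (by
        filter_upwards [hP] with τ hτ
        rw [Finset.sum_disjSum]
        simp only [Sum.elim_inl, Sum.elim_inr, Pi.mul_apply, neg_mul, Finset.sum_neg_distrib,
          ← mul_assoc, ← Finset.sum_mul]
        rw [hτ, add_neg_cancel])
    filter_upwards [this] with τ hτ
    rw [Finset.sum_disjSum] at hτ
    simp only [Sum.elim_inl, Sum.elim_inr, Pi.mul_apply, neg_mul, Finset.sum_neg_distrib, map_neg,
      Rat.cast_neg, ← mul_assoc, ← Finset.sum_mul] at hτ
    rw [evalJF_descP, evalJF_descP]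
    exact add_neg_eq_zero.1 hτ

/-- Identity theorem. -/
lemma mer_ident {W : ℍ → ℂ} (hW : Mer W) (h0 : ∀ᶠ τ in atImInfty, W τ = 0) (τ : ℍ) :
    ∀ᶠ σ in 𝓝[≠] τ, W σ = 0 := by
  obtain ⟨A, hA⟩ := (atImInfty_mem _).1 h0
  let σ : ℍ := ⟨((|A| + 1 : ℝ) : ℂ) * Complex.I, by simp; positivity⟩
  have hσ : A < σ.im := by
    have : σ.im = |A| + 1 := by
      change (((|A| + 1 : ℝ) : ℂ) * Complex.I).im = _
      simp
    rw [this]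
    linarith [le_abs_self A]
  have h1 : ∀ᶠ ρ in 𝓝[≠] σ, W ρ = 0 := by
    refine Filter.Eventually.filter_mono nhdsWithin_le_nhds ?_
    filter_upwards [(isOpen_lt continuous_const UpperHalfPlane.continuous_im).mem_nhds hσ] with ρ hρ
    exact hA ρ (le_of_lt hρ)
  have tr : ∀ ρ : ℍ, meromorphicOrderAt (extH W) ρ = ⊤ ↔ ∀ᶠ x in 𝓝[≠] ρ, W x = 0 := by
    intro ρ
    rw [meromorphicOrderAt_eq_top_iff, ← map_coe_punctured, eventually_map]
    simp only [extH_coe]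
  rw [← tr]
  by_contra hne
  refine MeromorphicOn.meromorphicOrderAt_ne_top_of_isPreconnected hW ?_ τ.im_pos σ.im_pos hne ((tr σ).2 h1)
  exact (convex_halfSpace_im_gt 0).isPreconnected

lemma evalJF_mem (R : Subring (ℍ → ℂ)) (m : ℕ) (hc : ∀ c : ℚ, (fun _ => (c : ℂ)) ∈ R)
    (hj : jinv ∈ R) (hf : fricke ((1 : ℚ) / m, 0) ∈ R) (P : MvPolynomial (Fin 2) ℚ) :
    evalJF m P ∈ R := by
  induction P using MvPolynomial.induction_on with
  | C a =>
    have : evalJF m (MvPolynomial.C a) = fun _ => (a : ℂ) := by funext τ; simp [evalJF]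
    rw [this]; exact hc a
  | add p q hp hq =>
    have : evalJF m (p + q) = evalJF m p + evalJF m q := by funext τ; simp [evalJF]
    rw [this]; exact R.add_mem hp hq
  | mul_X p i hp =>
    fin_cases i
    · have : evalJF m (p * MvPolynomial.X 0) = evalJF m p * jinv := by funext τ; simp [evalJF]
      exact this ▸ R.mul_mem hp hj
    · have : evalJF m (p * MvPolynomial.X 1) = evalJF m p * fricke ((1 : ℚ) / m, 0) := by
        funext τ; simp [evalJF]
      exact this ▸ R.mul_mem hp hf

lemma f_Hol1 {m : ℕ} (hm : 1 < m) : Hol (fricke ((1 : ℚ) / m, 0)) := by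
  have := f_Hol hm 1
  simpa only [one_smul] using this

lemma evalJF_Hol {m : ℕ} (hm : 1 < m) (P : MvPolynomial (Fin 2) ℚ) : Hol (evalJF m P) :=
  evalJF_mem HolR m (fun c => Hol.const c) jinv_Hol (f_Hol1 hm) P

lemma evalJF_QK {m : ℕ} (hm : 1 < m) (P : MvPolynomial (Fin 2) ℚ) : QK KQ m (evalJF m P) :=
  evalJF_mem (QKr KQ m) m (fun c => QK.const (rat_mem c)) (jinv_QK.level (by omega)) (f_QK hm) P

lemma evalJF_QKc {m : ℕ} (hm : 1 < m) (P : MvPolynomial (Fin 2) ℚ) (γ : SL(2, ℤ)) :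
    QK ⊤ m (fun τ => evalJF m P (γ • τ)) := by
  have : evalJF m P ∈ (QKr ⊤ m).comap (compH γ) := by
    refine evalJF_mem _ m (fun c => ?_) ?_ ?_ P
    · exact QK.const trivial
    · change QK ⊤ m (fun τ => jinv (γ • τ))
      simp only [jinv_smul]
      exact (jinv_QK.level (by omega)).mono le_top
    · exact f_QK' hm γ
  exact this

lemma part_one {m : ℕ} (hm : 1 < m) (h : ℍ → ℂ) (H : IsMeroModUp m h) :
    ∃ P Q : MvPolynomial (Fin 2) ℚ,
        (∃ τ : ℍ, evalJF m Q τ ≠ 0) ∧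
        ∀ τ : ℍ, evalJF m Q τ ≠ 0 → ContinuousAt (extH h) (τ : ℂ) →
          h τ = evalJF m P τ / evalJF m Q τ := by
  obtain ⟨h1, h2, ⟨A, n0, c, hc⟩, h4⟩ := H
  have hq : QK KQ m h := QK.of_hasSum (by omega) (c := fun n => (c n : ℂ)) (fun n => rat_mem _) hc
  have hq2 : ∀ γ : SL(2, ℤ), QK ⊤ m (fun τ => h (γ • τ)) := by
    intro γ
    obtain ⟨A, n0, c, hc⟩ := h4 γ
    exact QK.of_hasSum (by omega) (fun n => trivial) hc
  obtain ⟨P, Q, hQ, hP⟩ := complex_rat hm h1 h2 hq2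
  obtain ⟨P', Q', hQ', hP'⟩ := rat_descent hm hq hQ hP
  refine ⟨P', Q', hQ', fun τ hτ hcont => ?_⟩
  set W : ℍ → ℂ := evalJF m Q' * h + -evalJF m P' with hW
  have hWm : Mer W := ((evalJF_Hol hm Q').mer.mul h1).add (evalJF_Hol hm P').mer.neg
  have h0 := mer_ident hWm (by
    filter_upwards [hP'] with σ hσ
    simp [hW, hσ]) τ
  have hWc : ContinuousAt W τ :=
    (((evalJF_Hol hm Q').continuousAt τ).mul (cont_of_ext hcont)).add ((evalJF_Hol hm P').continuousAt τ).neg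
  have hz : W τ = 0 := by
    refine tendsto_nhds_unique (hWc.tendsto.mono_left (nhdsWithin_le_nhds (s := {τ}ᶜ))) ?_
    exact tendsto_const_nhds.congr' (h0.mono fun σ hσ => hσ.symm)
  rw [eq_div_iff hτ, mul_comm]
  exact add_neg_eq_zero.1 hz

lemma part_two {m : ℕ} (hm : 1 < m) (P Q : MvPolynomial (Fin 2) ℚ) :
    IsMeroModUp m (fun τ => evalJF m P τ / evalJF m Q τ) := by
  have hm0 : 0 < m := by omega
  refine ⟨(evalJF_Hol hm P).mer.div (evalJF_Hol hm Q).mer, ?_, ?_, ?_⟩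
  · intro γ hγ τ
    simp only [evalJF, jinv_smul, f_inv hm γ hγ]
  · obtain ⟨A, n0, c, hc, hs⟩ := ((evalJF_QK hm P).div hm0 (evalJF_QK hm Q)).hasSum hm0
    choose d hd using fun n => mem_KQ (hc n)
    refine ⟨A, n0, d, fun τ hτ => ?_⟩
    simp only [hd]
    exact hs τ hτ
  · intro γ
    obtain ⟨A, n0, c, hc, hs⟩ := ((evalJF_QKc hm P γ).div hm0 (evalJF_QKc hm Q γ)).hasSum hm0
    exact ⟨A, n0, c, hs⟩

/-- `F^1_m(ℚ) = ℚ(j, f_{(1/m,0)})`: every meromorphic modular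
function for `Γ^1(m)` with rational Fourier coefficients is a rational function
in `j` and `f_{(1/m,0)}` over `ℚ`, and conversely every such rational function
lies in `F^1_m(ℚ)`. -/
theorem statement11 (m : ℕ) (hm : 1 < m) :
    (∀ h : ℍ → ℂ, IsMeroModUp m h →
      ∃ P Q : MvPolynomial (Fin 2) ℚ,
        (∃ τ : ℍ, evalJF m Q τ ≠ 0) ∧
        ∀ τ : ℍ, evalJF m Q τ ≠ 0 → ContinuousAt (extH h) (τ : ℂ) →
          h τ = evalJF m P τ / evalJF m Q τ) ∧
    (∀ P Q : MvPolynomial (Fin 2) ℚ, (∃ τ : ℍ, evalJF m Q τ ≠ 0) →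
      IsMeroModUp m (fun τ => evalJF m P τ / evalJF m Q τ)) := by
  exact ⟨part_one hm, fun P Q _ => part_two hm P Q⟩
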